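/- There is a universal constant C ∈ (0,∞) such that for every p, q ∈ [1,∞), every Banach space (X,‖·‖_X), and every smooth compactly supported f : ℍ(ℝ) → X, (∫₀^∞ (∫_{ℍ(ℝ)} ‖f(hc^t) − f(h)‖_X^p dμ(h))^{q/p} dt/t^{1+q/2})^{1/q} ≤ C (∫₀^∞ t^{q−1} ‖Q_t * ∇_ℍ f‖_{L_p(ℍ(ℝ),ℓ_p²(X))}^q dt)^{1/q}. -/

import Mathlib

open MeasureTheory

/-- The real Heisenberg group `ℍ(ℝ)`, identified with `ℝ³`; the Lebesgue measure
(`volume`) is a Haar measure for the Heisenberg group structure. -/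
abbrev HR : Type := ℝ × ℝ × ℝ

namespace HR

/-- Right translation by the central element `c^t`: `h ↦ h·c^t`. -/
def vmul (t : ℝ) (h : HR) : HR := (h.1, h.2.1, h.2.2 + t)

/-- The Poisson kernel `P_t(u) = t/(π(t²+u²))` on `ℝ`. -/
noncomputable def Pker (t u : ℝ) : ℝ := t / (Real.pi * (t ^ 2 + u ^ 2))

/-- `Q_t(u) = ∂P_t/∂t(u) = (u²−t²)/(π(t²+u²)²)`. -/
noncomputable def Qker (t u : ℝ) : ℝ := (u ^ 2 - t ^ 2) / (Real.pi * (t ^ 2 + u ^ 2) ^ 2)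

variable {X : Type*} [NormedAddCommGroup X] [NormedSpace ℝ X]

/-- Convolution of a kernel `ψ : ℝ → ℝ` with `g : ℍ(ℝ) → X` along the center:
`(ψ*g)(x,y,z) = ∫_ℝ ψ(u) g(x,y,z−u) du`. -/
noncomputable def conv (ψ : ℝ → ℝ) (g : HR → X) (h : HR) : X :=
  ∫ u : ℝ, ψ u • g (h.1, h.2.1, h.2.2 - u)

/-- The left-invariant horizontal derivative `∂_a f = ∂f/∂x`. -/
noncomputable def da (f : HR → X) (h : HR) : X := fderiv ℝ f h (1, 0, 0)

/-- The left-invariant horizontal derivative `∂_b f = ∂f/∂y + x·∂f/∂z`. -/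
noncomputable def db (f : HR → X) (h : HR) : X :=
  fderiv ℝ f h (0, 1, 0) + h.1 • fderiv ℝ f h (0, 0, 1)

end HR

namespace HR

open scoped FourierTransform Real

lemma two_sided_exp_fourier {t : ℝ} (ht : 0 < t) :
    Integrable (fun ξ : ℝ => Complex.exp (-(2 * π * t * |ξ| : ℝ))) ∧
    ∀ v : ℝ, 𝓕 (fun ξ : ℝ => Complex.exp (-(2 * π * t * |ξ| : ℝ))) v = (Pker t v : ℂ) := by
  have key : ∀ v : ℝ,
      Integrable (fun ξ : ℝ => Complex.exp ((-2 * π * v * Complex.I) * ξ) *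
        Complex.exp (-(2 * π * t * |ξ| : ℝ))) ∧
      ∫ ξ : ℝ, Complex.exp ((-2 * π * v * Complex.I) * ξ) *
        Complex.exp (-(2 * π * t * |ξ| : ℝ)) = (Pker t v : ℂ) := by
    intro v
    set a : ℂ := -2 * π * t - 2 * π * v * Complex.I with ha
    set b : ℂ := 2 * π * t - 2 * π * v * Complex.I with hb
    have hare : a.re < 0 := by
      simp [ha]; positivity
    have hbre : 0 < b.re := by
      simp [hb]; positivity
    have e1 : Set.EqOn (fun ξ : ℝ => Complex.exp ((-2 * π * v * Complex.I) * ξ) *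
        Complex.exp (-(2 * π * t * |ξ| : ℝ))) (fun ξ : ℝ => Complex.exp (a * ξ)) (Set.Ioi 0) := by
      intro ξ hξ
      have : |ξ| = ξ := abs_of_pos hξ
      simp only [this, ← Complex.exp_add, ha]
      push_cast; ring_nf
    have e2 : Set.EqOn (fun ξ : ℝ => Complex.exp ((-2 * π * v * Complex.I) * ξ) *
        Complex.exp (-(2 * π * t * |ξ| : ℝ))) (fun ξ : ℝ => Complex.exp (b * ξ)) (Set.Iic 0) := by
      intro ξ hξ
      have : |ξ| = -ξ := abs_of_nonpos hξ
      simp only [this, ← Complex.exp_add, hb]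
      push_cast; ring_nf
    have i1 := (integrableOn_exp_mul_complex_Ioi hare 0).congr_fun e1.symm measurableSet_Ioi
    have i2 := (integrableOn_exp_mul_complex_Iic hbre 0).congr_fun e2.symm measurableSet_Iic
    have hi : Integrable (fun ξ : ℝ => Complex.exp ((-2 * π * v * Complex.I) * ξ) *
        Complex.exp (-(2 * π * t * |ξ| : ℝ))) := by
      rw [← integrableOn_univ, ← Set.Iic_union_Ioi (a := (0 : ℝ))]
      exact i2.union i1
    refine ⟨hi, ?_⟩
    rw [← intervalIntegral.integral_Iic_add_Ioi i2 i1, setIntegral_congr_fun measurableSet_Ioi e1,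
      setIntegral_congr_fun measurableSet_Iic e2, integral_exp_mul_complex_Ioi hare,
      integral_exp_mul_complex_Iic hbre]
    have ha0 : a ≠ 0 := fun h => by simp [h] at hare
    have hb0 : b ≠ 0 := fun h => by simp [h] at hbre
    have hd : (t : ℂ) ^ 2 + (v : ℂ) ^ 2 ≠ 0 := by
      have : t ^ 2 + v ^ 2 ≠ 0 := by positivity
      exact_mod_cast this
    have hab : a * b = -(4 * π ^ 2 * (t ^ 2 + v ^ 2)) := by
      simp only [ha, hb]; ring_nf; simp; ring
    have hpi : (π : ℂ) ≠ 0 := by exact_mod_cast Real.pi_ne_zero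
    simp only [Pker, Complex.ofReal_zero, mul_zero, Complex.exp_zero]
    push_cast
    have : (1 : ℂ) / b + -1 / a = (a - b) / (a * b) := by field_simp; ring
    rw [this, hab, show a - b = -(4 * π * t) by simp only [ha, hb]; ring]
    field_simp
  refine ⟨by simpa using (key 0).1, fun v => ?_⟩
  rw [Real.fourier_eq', ← (key v).2]
  congr 1; ext ξ
  simp only [smul_eq_mul, RCLike.inner_apply, conj_trivial]
  congr 2
  push_cast; ring

lemma Pker_pos {t : ℝ} (ht : 0 < t) (u : ℝ) : 0 < Pker t u := by
  unfold Pker; positivity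

lemma Pker_neg (t u : ℝ) : Pker t (-u) = Pker t u := by simp [Pker]

lemma continuous_Pker {t : ℝ} (ht : 0 < t) : Continuous (Pker t) := by
  unfold Pker
  exact continuous_const.div (by fun_prop) (fun u => by positivity)

lemma Pker_eq_cauchy {t : ℝ} (ht : 0 < t) :
    Pker t = ProbabilityTheory.cauchyPDFReal 0 ⟨t, ht.le⟩ := by
  ext u
  change _ = π⁻¹ * t * ((u - 0) ^ 2 + t ^ 2)⁻¹
  unfold Pker
  rw [sub_zero]
  field_simp
  ring

lemma integrable_Pker {t : ℝ} (ht : 0 < t) : Integrable (Pker t) := by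
  rw [Pker_eq_cauchy ht]; fun_prop

lemma integral_Pker {t : ℝ} (ht : 0 < t) : ∫ u, Pker t u = 1 := by
  rw [Pker_eq_cauchy ht]
  exact ProbabilityTheory.integral_cauchyPDFReal_eq_one 0 (fun h => ht.ne' (congrArg NNReal.toReal h))

lemma fourier_Pker {t : ℝ} (ht : 0 < t) (ξ : ℝ) :
    𝓕 (fun u : ℝ => (Pker t u : ℂ)) ξ = Complex.exp (-(2 * π * t * |ξ| : ℝ)) := by
  obtain ⟨hi, hF⟩ := two_sided_exp_fourier ht
  have h1 : 𝓕 (fun ξ : ℝ => Complex.exp (-(2 * π * t * |ξ| : ℝ))) = fun u : ℝ => (Pker t u : ℂ) :=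
    funext hF
  have hc : Continuous (fun ξ : ℝ => Complex.exp (-(2 * π * t * |ξ| : ℝ))) := by fun_prop
  have h2 := hc.fourierInv_fourier_eq hi (by rw [h1]; exact (integrable_Pker ht).ofReal)
  have h3 := congrFun h2 (-ξ)
  rw [Real.fourierInv_eq_fourier_neg, h1] at h3
  simpa using h3

/-- The Poisson semigroup identity `P_s * P_t = P_{s+t}`. -/
lemma integral_Pker_mul_Pker {s t : ℝ} (hs : 0 < s) (ht : 0 < t) (v : ℝ) :
    ∫ u, Pker s u * Pker t (v - u) = Pker (s + t) v := by
  obtain ⟨hi, hF⟩ := two_sided_exp_fourier ht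
  obtain ⟨-, hF'⟩ := two_sided_exp_fourier (add_pos hs ht)
  set g : ℝ → ℂ := fun ξ => Complex.exp ((2 * π * v * Complex.I) * ξ) *
    Complex.exp (-(2 * π * t * |ξ| : ℝ)) with hg
  have hgi : Integrable g := by
    refine hi.bdd_mul (c := 1) (by fun_prop) (Filter.Eventually.of_forall fun ξ => ?_)
    rw [Complex.norm_exp]; simp
  have hgF : ∀ u, 𝓕 g u = (Pker t (v - u) : ℂ) := by
    intro u
    rw [← Pker_neg, ← hF, Real.fourier_eq', Real.fourier_eq']
    congr 1; ext ξ
    simp only [smul_eq_mul, RCLike.inner_apply, conj_trivial, hg, ← Complex.exp_add]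
    congr 1
    push_cast; ring
  have hswap : ∫ ξ, 𝓕 (fun u : ℝ => (Pker s u : ℂ)) ξ • g ξ = ∫ u, (Pker s u : ℂ) • 𝓕 g u := by
    simpa using! (VectorFourier.integral_fourierIntegral_smul_eq_flip (L := innerₗ ℝ)
        Real.continuous_fourierChar continuous_inner (integrable_Pker hs).ofReal hgi)
  have hR : ∫ ξ, 𝓕 (fun u : ℝ => (Pker s u : ℂ)) ξ • g ξ = (Pker (s + t) v : ℂ) := by
    rw [← Pker_neg, ← hF', Real.fourier_eq']
    congr 1; ext ξ
    rw [fourier_Pker hs]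
    simp only [smul_eq_mul, RCLike.inner_apply, conj_trivial, hg, ← Complex.exp_add]
    congr 1
    push_cast; ring
  rw [hR] at hswap
  have : ((∫ u, Pker s u * Pker t (v - u) : ℝ) : ℂ) = (Pker (s + t) v : ℂ) := by
    rw [hswap, ← integral_complex_ofReal]
    congr 1; ext u
    rw [hgF]; simp
  exact_mod_cast this

lemma hasDerivAt_Pker {t : ℝ} (ht : 0 < t) (u : ℝ) :
    HasDerivAt (fun t => Pker t u) (Qker t u) t := by
  unfold Pker Qker
  have h : Real.pi * (t ^ 2 + u ^ 2) ≠ 0 := by positivity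
  have h2 : t ^ 2 + u ^ 2 ≠ 0 := by positivity
  refine ((hasDerivAt_id' t).div
    (((hasDerivAt_pow 2 t).add_const (u ^ 2)).const_mul Real.pi) h).congr_deriv ?_
  push_cast
  field_simp
  ring

lemma abs_Qker_le {t : ℝ} (ht : 0 < t) (u : ℝ) : |Qker t u| ≤ Pker t u / t := by
  have h2 : 0 < t ^ 2 + u ^ 2 := by positivity
  have : Pker t u / t = (t ^ 2 + u ^ 2) / (Real.pi * (t ^ 2 + u ^ 2) ^ 2) := by
    unfold Pker; field_simp
  rw [this, Qker, abs_div, abs_of_pos (a := Real.pi * (t ^ 2 + u ^ 2) ^ 2) (by positivity)]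
  gcongr
  rw [abs_le]; constructor <;> nlinarith [sq_nonneg t, sq_nonneg u]

lemma continuous_Qker {t : ℝ} (ht : 0 < t) : Continuous (Qker t) := by
  unfold Qker
  exact (by fun_prop : Continuous fun u : ℝ => u ^ 2 - t ^ 2).div (by fun_prop)
    (fun u => by positivity)

lemma integrable_Qker {t : ℝ} (ht : 0 < t) : Integrable (Qker t) :=
  ((integrable_Pker ht).div_const t).mono' (continuous_Qker ht).aestronglyMeasurable
    (Filter.Eventually.of_forall fun u => abs_Qker_le ht u)

lemma Pker_le {t : ℝ} (ht : 0 < t) (u : ℝ) : Pker t u ≤ 1 / (Real.pi * t) := by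
  unfold Pker
  rw [div_le_div_iff₀ (by positivity) (by positivity)]
  nlinarith [Real.pi_pos, mul_nonneg Real.pi_pos.le (sq_nonneg u)]

lemma integral_Pker_mul_Qker {s : ℝ} (hs : 0 < s) (v : ℝ) :
    ∫ u, Pker s u * Qker s (v - u) = Qker (s + s) v := by
  have hball : ∀ x ∈ Metric.ball s (s / 2), s / 2 < x := by
    intro x hx
    rw [Metric.mem_ball, Real.dist_eq, abs_lt] at hx; linarith
  have h := hasDerivAt_integral_of_dominated_loc_of_deriv_le (μ := volume) (x₀ := s)
    (F := fun t u => Pker s u * Pker t (v - u)) (F' := fun t u => Pker s u * Qker t (v - u))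
    (bound := fun u => Pker s u * (1 / (Real.pi * (s / 2)) / (s / 2)))
    (Metric.ball_mem_nhds s (half_pos hs)) ?_ ?_ ?_ ?_ ?_ ?_
  · have h1 : HasDerivAt (fun t => ∫ u, Pker s u * Pker t (v - u)) (Qker (s + s) v) s := by
      have : HasDerivAt (fun t => Pker (s + t) v) (Qker (s + s) v) s := by
        simpa using (hasDerivAt_Pker (add_pos hs hs) v).comp_const_add s s
      refine this.congr_of_eventuallyEq ?_
      filter_upwards [lt_mem_nhds hs] with t ht
      exact integral_Pker_mul_Pker hs ht v
    exact h.2.unique h1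
  · filter_upwards [lt_mem_nhds hs] with t ht
    exact ((continuous_Pker hs).mul ((continuous_Pker ht).comp (by fun_prop))).aestronglyMeasurable
  · refine (integrable_Pker hs).mul_bdd (c := 1 / (Real.pi * s))
      ((continuous_Pker hs).comp (by fun_prop : Continuous fun u => v - u)).aestronglyMeasurable
      (Filter.Eventually.of_forall fun u => ?_)
    rw [Real.norm_of_nonneg (Pker_pos hs _).le]
    exact Pker_le hs _
  · exact ((continuous_Pker hs).mul ((continuous_Qker hs).comp (by fun_prop))).aestronglyMeasurable
  · refine Filter.Eventually.of_forall fun u x hx => ?_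
    have hx' := hball x hx
    have hx0 : 0 < x := by linarith
    rw [norm_mul, Real.norm_of_nonneg (Pker_pos hs _).le]
    refine mul_le_mul_of_nonneg_left ?_ (Pker_pos hs _).le
    refine (abs_Qker_le hx0 _).trans ?_
    have := Pker_le hx0 (v - u)
    calc Pker x (v - u) / x ≤ 1 / (Real.pi * x) / x := by gcongr
      _ ≤ _ := by gcongr
  · exact (integrable_Pker hs).mul_const _
  · refine Filter.Eventually.of_forall fun u x hx => ?_
    have hx0 : 0 < x := by linarith [hball x hx]
    exact (hasDerivAt_Pker hx0 _).const_mul _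

lemma abs_Pker_sub_le {s t : ℝ} (hs : 0 < s) (ht : 0 ≤ t) (u : ℝ) :
    |Pker s (u + t) - Pker s u| ≤ t / (2 * s) * (Pker s (u + t) + Pker s u) := by
  set A := s ^ 2 + (u + t) ^ 2 with hA
  set B := s ^ 2 + u ^ 2 with hB
  have hA0 : 0 < A := by positivity
  have hB0 : 0 < B := by positivity
  have e1 : Pker s (u + t) - Pker s u = -(s * t * (u + (u + t)) / (Real.pi * (A * B))) := by
    simp only [Pker, ← hA, ← hB]; field_simp; simp only [hA, hB]; ring
  have e2 : t / (2 * s) * (Pker s (u + t) + Pker s u) = t * ((A + B) / 2) / (Real.pi * (A * B)) := by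
    simp only [Pker, ← hA, ← hB]; field_simp; ring
  rw [e1, e2, abs_neg, abs_div, abs_of_pos (a := Real.pi * (A * B)) (by positivity)]
  gcongr
  rw [mul_comm s t, mul_assoc, abs_mul, abs_of_nonneg ht]
  gcongr
  rw [abs_le]; constructor <;> nlinarith [sq_nonneg (s - u), sq_nonneg (s + u),
    sq_nonneg (s - (u + t)), sq_nonneg (s + (u + t))]

lemma Pker_scale {s : ℝ} (hs : 0 < s) (u : ℝ) : Pker s (s * u) = s⁻¹ * Pker 1 u := by
  unfold Pker; field_simp

/-- The constant `∫ P_1(u) √|u| du`. -/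
noncomputable def cP : ℝ := ∫ u, Pker 1 u * √|u|

lemma integrable_Pker_one_mul_sqrt : Integrable (fun u => Pker 1 u * √|u|) := by
  have := (integrable_rpow_neg_one_add_norm_sq (E := ℝ) (μ := volume) (r := 3 / 2)
    (by simp; norm_num)).const_mul Real.pi⁻¹
  refine this.mono' ((continuous_Pker one_pos).mul (by fun_prop)).aestronglyMeasurable
    (Filter.Eventually.of_forall fun u => ?_)
  rw [Real.norm_of_nonneg (mul_nonneg (Pker_pos one_pos u).le (Real.sqrt_nonneg _))]
  have h1 : 0 < 1 + u ^ 2 := by positivity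
  have h2 : √|u| ≤ (1 + u ^ 2) ^ (1 / 4 : ℝ) := by
    have : √|u| = (u ^ 2) ^ (1 / 4 : ℝ) := by
      rw [Real.sqrt_eq_rpow, ← sq_abs u, ← Real.rpow_natCast, ← Real.rpow_mul (abs_nonneg u)]
      norm_num
    rw [this]; gcongr; linarith
  calc Pker 1 u * √|u| ≤ Pker 1 u * (1 + u ^ 2) ^ (1 / 4 : ℝ) := by
        gcongr; exact (Pker_pos one_pos u).le
    _ = Real.pi⁻¹ * ((1 + u ^ 2) ^ (-1 : ℝ) * (1 + u ^ 2) ^ (1 / 4 : ℝ)) := by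
        rw [Real.rpow_neg_one]; unfold Pker; field_simp
    _ = _ := by
        rw [← Real.rpow_add h1, Real.norm_eq_abs, sq_abs]; norm_num

lemma cP_nonneg : 0 ≤ cP :=
  integral_nonneg fun u => mul_nonneg (Pker_pos one_pos u).le (Real.sqrt_nonneg _)

lemma lintegral_Pker_mul_sqrt {s : ℝ} (hs : 0 < s) :
    ∫⁻ u, ENNReal.ofReal (Pker s u) * ENNReal.ofReal √|u| = ENNReal.ofReal (cP * √s) := by
  have hfun : (fun u => Pker s u * √|u|) =
      fun u => √s * (s⁻¹ * ((fun v => Pker 1 v * √|v|) (s⁻¹ * u))) := by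
    ext u
    have h1 : Pker s u = s⁻¹ * Pker 1 (s⁻¹ * u) := by
      rw [← Pker_scale hs, mul_inv_cancel_left₀ hs.ne']
    have h2 : √|u| = √s * √|s⁻¹ * u| := by
      rw [← Real.sqrt_mul hs.le, abs_mul, abs_of_pos (inv_pos.2 hs), mul_inv_cancel_left₀ hs.ne']
    rw [h1, h2]; ring
  have hint : Integrable (fun u => Pker s u * √|u|) := by
    rw [hfun]
    exact ((integrable_Pker_one_mul_sqrt.comp_mul_left' (inv_ne_zero hs.ne')).const_mul _).const_mul _
  have hval : ∫ u, Pker s u * √|u| = cP * √s := by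
    rw [hfun, integral_const_mul, integral_const_mul,
      Measure.integral_comp_mul_left (fun v => Pker 1 v * √|v|), ← cP]
    rw [inv_inv, abs_of_pos hs, smul_eq_mul, inv_mul_cancel_left₀ hs.ne', mul_comm]
  rw [← hval, ofReal_integral_eq_lintegral_ofReal hint
    (Filter.Eventually.of_forall fun u => mul_nonneg (Pker_pos hs u).le (Real.sqrt_nonneg _))]
  congr 1; ext u
  rw [ENNReal.ofReal_mul (Pker_pos hs u).le]

end HR

namespace HR

open scoped ENNReal

section Minkowski

variable {α β : Type*} [MeasurableSpace α] [MeasurableSpace β]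

/-- Jensen's inequality for a density `w` of total mass `W`. -/
lemma lintegral_mul_rpow_le {μ : Measure α} {w G : α → ℝ≥0∞} (hw : Measurable w)
    (hG : Measurable G) {p : ℝ} (hp : 1 ≤ p) :
    (∫⁻ a, w a * G a ∂μ) ^ p ≤ (∫⁻ a, w a * G a ^ p ∂μ) * (∫⁻ a, w a ∂μ) ^ (p - 1) := by
  have hp0 : 0 < p := by linarith
  have h := eLpNorm'_le_eLpNorm'_mul_rpow_measure_univ (μ := μ.withDensity w) (f := G)
    one_pos hp hG.aestronglyMeasurable
  simp only [eLpNorm'_eq_lintegral_enorm, enorm_eq_self, ENNReal.rpow_one, div_one] at h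
  rw [lintegral_withDensity_eq_lintegral_mul _ hw hG,
    lintegral_withDensity_eq_lintegral_mul _ hw (hG.pow_const p),
    withDensity_apply _ MeasurableSet.univ, setLIntegral_univ] at h
  have h2 := ENNReal.rpow_le_rpow h hp0.le
  rw [ENNReal.mul_rpow_of_nonneg _ _ hp0.le, ← ENNReal.rpow_mul, ← ENNReal.rpow_mul] at h2
  have e1 : 1 / p * p = 1 := by field_simp
  have e2 : (1 - 1 / p) * p = p - 1 := by field_simp
  rw [e1, e2, ENNReal.rpow_one] at h2
  exact h2

/-- Minkowski's integral inequality. -/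
lemma lintegral_rpow_lintegral_le {μ : Measure α} {ν : Measure β} [SFinite μ] [SFinite ν]
    {F : α → β → ℝ≥0∞} (hF : Measurable (Function.uncurry F)) {p : ℝ} (hp : 1 ≤ p) :
    (∫⁻ b, (∫⁻ a, F a b ∂μ) ^ p ∂ν) ^ (1 / p) ≤ ∫⁻ a, (∫⁻ b, F a b ^ p ∂ν) ^ (1 / p) ∂μ := by
  have hp0 : 0 < p := by linarith
  have e1 : 1 / p * p = 1 := by field_simp
  have hFp : Measurable (Function.uncurry fun a b => F a b ^ p) := hF.pow_const p
  set w : α → ℝ≥0∞ := fun a => (∫⁻ b, F a b ^ p ∂ν) ^ (1 / p) with hw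
  have hwm : Measurable w := (hFp.lintegral_prod_right').pow_const _
  have hwp : ∀ a, w a ^ p = ∫⁻ b, F a b ^ p ∂ν := by
    intro a; rw [hw]; simp only; rw [← ENNReal.rpow_mul, e1, ENNReal.rpow_one]
  have hFa : ∀ a, Measurable fun b => F a b := fun a => hF.comp measurable_prodMk_left
  set W := ∫⁻ a, w a ∂μ with hW
  rcases eq_or_ne W ⊤ with hT | hT
  · rw [hT]; exact le_top
  have hfin : ∀ᵐ a ∂μ, w a < ⊤ := ae_lt_top hwm hT
  have hz : ∀ᵐ a ∂μ, ∀ᵐ b ∂ν, F a b ≤ w a * (F a b / w a) := by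
    filter_upwards [hfin] with a ha
    rcases eq_or_ne (w a) 0 with h0 | h0
    · have h1 : ∫⁻ b, F a b ^ p ∂ν = 0 := by
        rw [← hwp, h0, ENNReal.zero_rpow_of_pos hp0]
      rw [lintegral_eq_zero_iff ((hFa a).pow_const p)] at h1
      filter_upwards [h1] with b hb
      have : F a b = 0 := by
        have hb' : F a b ^ p = 0 := hb
        rwa [ENNReal.rpow_eq_zero_iff_of_pos hp0] at hb'
      simp [this]
    · refine Filter.Eventually.of_forall fun b => ?_
      rw [ENNReal.mul_div_cancel h0 ha.ne]
  have hms : MeasurableSet {x : α × β | F x.1 x.2 ≤ w x.1 * (F x.1 x.2 / w x.1)} :=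
    measurableSet_le hF ((hwm.comp measurable_fst).mul (hF.div (hwm.comp measurable_fst)))
  have hz2 := (Measure.ae_ae_comm hms).1 hz
  have hdivm : ∀ b, Measurable fun a => F a b / w a := fun b =>
    (hF.comp measurable_prodMk_right).div hwm
  have main : ∫⁻ b, (∫⁻ a, F a b ∂μ) ^ p ∂ν ≤ W ^ p := by
    calc ∫⁻ b, (∫⁻ a, F a b ∂μ) ^ p ∂ν
        ≤ ∫⁻ b, (∫⁻ a, w a * (F a b / w a) ^ p ∂μ) * W ^ (p - 1) ∂ν := by
          refine lintegral_mono_ae ?_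
          filter_upwards [hz2] with b hb
          exact (ENNReal.rpow_le_rpow (lintegral_mono_ae hb) hp0.le).trans
            (lintegral_mul_rpow_le hwm (hdivm b) hp)
      _ = (∫⁻ a, ∫⁻ b, w a * (F a b / w a) ^ p ∂ν ∂μ) * W ^ (p - 1) := by
          have hm : Measurable (Function.uncurry fun b a => w a * (F a b / w a) ^ p) :=
            (hwm.comp measurable_snd).mul
              (((hF.comp measurable_swap).div (hwm.comp measurable_snd)).pow_const p)
          have hm' : Measurable fun b => ∫⁻ a, w a * (F a b / w a) ^ p ∂μ :=
            hm.lintegral_prod_right'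
          rw [lintegral_mul_const _ hm', lintegral_lintegral_swap hm.aemeasurable]
      _ ≤ (∫⁻ a, w a ∂μ) * W ^ (p - 1) := by
          gcongr with a
          rw [lintegral_const_mul _ (((hFa a).div_const _).pow_const _)]
          have : ∀ b, (F a b / w a) ^ p = F a b ^ p * (w a ^ p)⁻¹ := by
            intro b; rw [ENNReal.div_rpow_of_nonneg _ _ hp0.le, div_eq_mul_inv]
          simp_rw [this]
          rw [lintegral_mul_const _ ((hFa a).pow_const p), ← hwp]
          exact mul_le_of_le_one_right' (ENNReal.mul_inv_le_one _)
      _ = W ^ p := by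
          rw [← hW]
          rcases eq_or_ne W 0 with h0 | h0
          · simp [h0, hp0]
          nth_rewrite 1 [← ENNReal.rpow_one W]
          rw [← ENNReal.rpow_add _ _ h0 hT]; congr 1; ring
  calc _ ≤ (W ^ p) ^ (1 / p) := ENNReal.rpow_le_rpow main (by positivity)
    _ = W := by rw [← ENNReal.rpow_mul, mul_one_div_cancel hp0.ne', ENNReal.rpow_one]

lemma eLpNorm_le_lintegral {μ : Measure α} {ν : Measure β} [SFinite μ] [SFinite ν]
    {E E' : Type*} [NormedAddCommGroup E] [NormedAddCommGroup E'] {g : β → E} {k : α → β → E'}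
    {w : α → ℝ≥0∞} (hw : Measurable w)
    (hk : Measurable (Function.uncurry fun a b => ‖k a b‖ₑ)) {p : ℝ} (hp : 1 ≤ p)
    (h : ∀ b, ‖g b‖ₑ ≤ ∫⁻ a, w a * ‖k a b‖ₑ ∂μ) :
    eLpNorm g (ENNReal.ofReal p) ν ≤ ∫⁻ a, w a * eLpNorm (k a) (ENNReal.ofReal p) ν ∂μ := by
  have hp0 : 0 < p := by linarith
  have h1 : ENNReal.ofReal p ≠ 0 := by simpa using hp0
  simp only [eLpNorm_eq_lintegral_rpow_enorm_toReal h1 ENNReal.ofReal_ne_top,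
    ENNReal.toReal_ofReal hp0.le]
  calc _ ≤ (∫⁻ b, (∫⁻ a, w a * ‖k a b‖ₑ ∂μ) ^ p ∂ν) ^ (1 / p) := by
        gcongr with b; exact h b
    _ ≤ ∫⁻ a, (∫⁻ b, (w a * ‖k a b‖ₑ) ^ p ∂ν) ^ (1 / p) ∂μ :=
        lintegral_rpow_lintegral_le ((hw.comp measurable_fst).mul hk) hp
    _ = _ := by
        congr 1; ext a
        have hka : Measurable fun b => ‖k a b‖ₑ := hk.comp measurable_prodMk_left
        simp_rw [ENNReal.mul_rpow_of_nonneg _ _ hp0.le]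
        rw [lintegral_const_mul _ (hka.pow_const _),
          ENNReal.mul_rpow_of_nonneg _ _ (by positivity), ← ENNReal.rpow_mul,
          mul_one_div_cancel hp0.ne', ENNReal.rpow_one]

end Minkowski

end HR

namespace HR

open scoped ENNReal

/-- Right translation by `a^r`. -/
def amul (r : ℝ) (h : HR) : HR := (h.1 + r, h.2.1, h.2.2)

/-- Right translation by `b^r`. -/
def bmul (r : ℝ) (h : HR) : HR := (h.1, h.2.1 + r, h.2.2 + h.1 * r)

lemma continuous_amul : Continuous (Function.uncurry amul) := by
  unfold amul Function.uncurry; fun_prop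

lemma continuous_bmul : Continuous (Function.uncurry bmul) := by
  unfold bmul Function.uncurry; fun_prop

lemma continuous_vmul : Continuous (Function.uncurry vmul) := by
  unfold vmul Function.uncurry; fun_prop

lemma measurePreserving_add_right_prod (v : HR) :
    MeasurePreserving (fun h : HR => h + v) :=
  (measurePreserving_add_right (volume : Measure ℝ) v.1).prod
    (measurePreserving_add_right (volume : Measure (ℝ × ℝ)) v.2)

lemma measurePreserving_amul (r : ℝ) : MeasurePreserving (amul r) := by
  have : amul r = fun h => h + (r, 0, 0) := by
    ext h <;> simp [amul]
  rw [this]; exact measurePreserving_add_right_prod _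

lemma measurePreserving_vmul (r : ℝ) : MeasurePreserving (vmul r) := by
  have : vmul r = fun h => h + (0, 0, r) := by
    ext h <;> simp [vmul]
  rw [this]; exact measurePreserving_add_right_prod _

lemma measurePreserving_bmul (r : ℝ) : MeasurePreserving (bmul r) := by
  have : MeasurePreserving (fun p : ℝ × (ℝ × ℝ) => (id p.1, p.2 + (r, p.1 * r)))
      (volume.prod volume) (volume.prod volume) := by
    refine (MeasurePreserving.id volume).skew_product (g := fun x q => q + (r, x * r)) ?_ ?_
    · exact (by fun_prop : Continuous fun p : ℝ × (ℝ × ℝ) => p.2 + (r, p.1 * r)).measurable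
    · exact Filter.Eventually.of_forall fun x =>
        (measurePreserving_add_right (volume : Measure (ℝ × ℝ)) (r, x * r)).map_eq
  exact this

section

variable {X : Type*} [NormedAddCommGroup X]

/-- Bounded continuous functions on the Heisenberg group. -/
def BddCont (g : HR → X) : Prop := Continuous g ∧ ∃ C, ∀ h, ‖g h‖ ≤ C

lemma bddCont_of_hasCompactSupport {f : HR → X} (hf : Continuous f) (h : HasCompactSupport f) :
    BddCont f :=
  ⟨hf, h.exists_bound_of_continuous hf⟩

lemma BddCont.sub {g k : HR → X} (hg : BddCont g) (hk : BddCont k) :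
    BddCont (fun h => g h - k h) := by
  obtain ⟨hc, C, hC⟩ := hg
  obtain ⟨hc', C', hC'⟩ := hk
  exact ⟨hc.sub hc', C + C', fun h => (norm_sub_le _ _).trans (add_le_add (hC h) (hC' h))⟩

lemma eLpNorm_comp {g : HR → X} (hg : Continuous g) {p : ℝ≥0∞} {T : HR → HR}
    (hT : MeasurePreserving T) : eLpNorm (fun h => g (T h)) p = eLpNorm g p :=
  eLpNorm_comp_measurePreserving hg.aestronglyMeasurable hT

variable [NormedSpace ℝ X]

lemma BddCont.integrable_smul {g : HR → X} (hg : BddCont g) {ψ : ℝ → ℝ} (hψ : Integrable ψ)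
    (h : HR) : Integrable fun u => ψ u • g (h.1, h.2.1, h.2.2 - u) := by
  obtain ⟨hc, C, hC⟩ := hg
  exact hψ.smul_bdd C (hc.comp (by fun_prop)).aestronglyMeasurable
    (Filter.Eventually.of_forall fun u => hC _)

lemma BddCont.conv {g : HR → X} (hg : BddCont g) {ψ : ℝ → ℝ} (hψ : Integrable ψ) :
    BddCont (conv ψ g) := by
  obtain ⟨hc, C, hC⟩ := id hg
  have hb : ∀ (h : HR) (u : ℝ), ‖ψ u • g (h.1, h.2.1, h.2.2 - u)‖ ≤ ‖ψ u‖ * C := fun h u => by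
    rw [norm_smul]; gcongr; exact hC _
  refine ⟨?_, ∫ u, ‖ψ u‖ * C, fun h => ?_⟩
  · refine continuous_of_dominated (bound := fun u => ‖ψ u‖ * C)
      (fun h => (hg.integrable_smul hψ h).aestronglyMeasurable)
      (fun h => Filter.Eventually.of_forall (hb h)) (hψ.norm.mul_const C)
      (Filter.Eventually.of_forall fun u => ?_)
    exact (hc.comp (by fun_prop)).const_smul _
  · exact norm_integral_le_of_norm_le (hψ.norm.mul_const C) (Filter.Eventually.of_forall (hb h))

lemma conv_sub {g k : HR → X} (hg : BddCont g) (hk : BddCont k) {ψ : ℝ → ℝ} (hψ : Integrable ψ)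
    (h : HR) : conv ψ (fun h => g h - k h) h = conv ψ g h - conv ψ k h := by
  unfold conv
  rw [← integral_sub (hg.integrable_smul hψ h) (hk.integrable_smul hψ h)]
  simp only [smul_sub]

/-- Iterated central convolutions are a convolution with the convolved kernel. -/
lemma conv_conv [CompleteSpace X] {g : HR → X} (hg : BddCont g) {ψ ψ' : ℝ → ℝ}
    (hψ : Integrable ψ) (hψ' : Integrable ψ') (h : HR) :
    conv ψ (conv ψ' g) h = conv (fun v => ∫ u, ψ u * ψ' (v - u)) g h := by
  obtain ⟨hc, C, hC⟩ := id hg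
  have hi : Integrable (fun p : ℝ × ℝ => (ψ p.2 * ψ' (p.1 - p.2)) • g (h.1, h.2.1, h.2.2 - p.1))
      (volume.prod volume) := by
    exact Integrable.smul_bdd
      (hψ.convolution_integrand (ContinuousLinearMap.mul ℝ ℝ) hψ') C
      (hc.comp (by fun_prop)).aestronglyMeasurable (Filter.Eventually.of_forall fun u => hC _)
  calc conv ψ (conv ψ' g) h
      = ∫ u, ∫ v, (ψ u * ψ' (v - u)) • g (h.1, h.2.1, h.2.2 - v) := by
        unfold conv
        congr 1; ext u
        rw [← integral_smul,
          ← integral_sub_right_eq_self (fun w => ψ u • ψ' w • g (h.1, h.2.1, h.2.2 - u - w)) u]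
        congr 1; ext v
        rw [smul_smul]; congr 4; ring
    _ = ∫ v, ∫ u, (ψ u * ψ' (v - u)) • g (h.1, h.2.1, h.2.2 - v) :=
        (integral_integral_swap hi).symm
    _ = _ := by
        unfold conv
        congr 1; ext v
        rw [integral_smul_const]

lemma BddCont.conv_Pker_Pker [CompleteSpace X] {g : HR → X} (hg : BddCont g) {s : ℝ} (hs : 0 < s)
    (h : HR) : HR.conv (Pker s) (HR.conv (Pker s) g) h = HR.conv (Pker (s + s)) g h := by
  rw [conv_conv hg (integrable_Pker hs) (integrable_Pker hs)]
  simp_rw [integral_Pker_mul_Pker hs hs]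

lemma BddCont.conv_Pker_Qker [CompleteSpace X] {g : HR → X} (hg : BddCont g) {s : ℝ} (hs : 0 < s)
    (h : HR) : HR.conv (Pker s) (HR.conv (Qker s) g) h = HR.conv (Qker (s + s)) g h := by
  rw [conv_conv hg (integrable_Pker hs) (integrable_Qker hs)]
  simp_rw [integral_Pker_mul_Qker hs]

/-! ### `L_p` bounds -/

lemma eLpNorm_conv_le {g : HR → X} (hg : BddCont g) {ψ : ℝ → ℝ} (hψ : Continuous ψ)
    {p : ℝ} (hp : 1 ≤ p) :
    eLpNorm (conv ψ g) (ENNReal.ofReal p) ≤ (∫⁻ u, ‖ψ u‖ₑ) * eLpNorm g (ENNReal.ofReal p) := by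
  refine (eLpNorm_le_lintegral (μ := (volume : Measure ℝ)) (w := fun u => ‖ψ u‖ₑ)
    (k := fun u h => g (vmul (-u) h)) hψ.enorm.measurable
    (hg.1.comp (continuous_vmul.comp (by fun_prop :
      Continuous fun x : ℝ × HR => (-x.1, x.2)))).enorm.measurable hp fun h => ?_).trans_eq ?_
  · refine (enorm_integral_le_lintegral_enorm _).trans_eq ?_
    congr 1; ext u
    rw [enorm_smul]; simp only [vmul, sub_eq_add_neg]
  · simp_rw [eLpNorm_comp hg.1 (measurePreserving_vmul _)]
    exact lintegral_mul_const _ hψ.enorm.measurable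

lemma lintegral_enorm_Pker {s : ℝ} (hs : 0 < s) : ∫⁻ u, ‖Pker s u‖ₑ = 1 := by
  have : ∀ u, ‖Pker s u‖ₑ = ENNReal.ofReal (Pker s u) := fun u =>
    Real.enorm_of_nonneg (Pker_pos hs u).le
  simp_rw [this]
  rw [← ofReal_integral_eq_lintegral_ofReal (integrable_Pker hs)
    (Filter.Eventually.of_forall fun u => (Pker_pos hs u).le), integral_Pker hs, ENNReal.ofReal_one]

lemma eLpNorm_conv_Pker_le {g : HR → X} (hg : BddCont g) {s : ℝ} (hs : 0 < s) {p : ℝ}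
    (hp : 1 ≤ p) : eLpNorm (conv (Pker s) g) (ENNReal.ofReal p) ≤ eLpNorm g (ENNReal.ofReal p) := by
  simpa [lintegral_enorm_Pker hs] using eLpNorm_conv_le hg (continuous_Pker hs) hp

/-- The Poisson kernel smooths at scale `s` along the center. -/
lemma eLpNorm_vmul_conv_Pker_sub_le {g : HR → X} (hg : BddCont g) {s t : ℝ} (hs : 0 < s)
    (ht : 0 ≤ t) {p : ℝ} (hp : 1 ≤ p) :
    eLpNorm (fun h => conv (Pker s) g (vmul t h) - conv (Pker s) g h) (ENNReal.ofReal p) ≤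
      ENNReal.ofReal (t / s) * eLpNorm g (ENNReal.ofReal p) := by
  have hs' : Integrable fun u => Pker s (u + t) := (integrable_Pker hs).comp_add_right t
  have hc : Continuous fun u => Pker s (u + t) := (continuous_Pker hs).comp (by fun_prop)
  have e : (fun h => conv (Pker s) g (vmul t h) - conv (Pker s) g h) =
      conv (fun u => Pker s (u + t) - Pker s u) g := by
    ext h
    have : conv (Pker s) g (vmul t h) = conv (fun u => Pker s (u + t)) g h := by
      unfold conv vmul
      rw [← integral_add_right_eq_self _ t]
      congr 1; ext u
      congr 4; simp only; ring
    rw [this]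
    unfold conv
    rw [← integral_sub (hg.integrable_smul hs' h) (hg.integrable_smul (integrable_Pker hs) h)]
    simp only [sub_smul]
  rw [e]
  refine (eLpNorm_conv_le hg (hc.sub (continuous_Pker hs)) hp).trans ?_
  gcongr
  calc ∫⁻ u, ‖Pker s (u + t) - Pker s u‖ₑ
      ≤ ∫⁻ u, ENNReal.ofReal (t / (2 * s)) * (‖Pker s (u + t)‖ₑ + ‖Pker s u‖ₑ) := by
        refine lintegral_mono fun u => ?_
        rw [Real.enorm_eq_ofReal_abs, Real.enorm_of_nonneg (Pker_pos hs _).le,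
          Real.enorm_of_nonneg (Pker_pos hs _).le,
          ← ENNReal.ofReal_add (Pker_pos hs _).le (Pker_pos hs _).le,
          ← ENNReal.ofReal_mul (by positivity)]
        exact ENNReal.ofReal_le_ofReal (abs_Pker_sub_le hs ht u)
    _ = ENNReal.ofReal (t / s) := by
        have hm : Measurable fun u => ‖Pker s (u + t)‖ₑ + ‖Pker s u‖ₑ :=
          hc.enorm.measurable.add (continuous_Pker hs).enorm.measurable
        rw [lintegral_const_mul _ hm,
          lintegral_add_left hc.enorm.measurable,
          lintegral_add_right_eq_self (fun u => ‖Pker s u‖ₑ) t, lintegral_enorm_Pker hs,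
          one_add_one_eq_two, ← ENNReal.ofReal_ofNat, ← ENNReal.ofReal_mul (by positivity)]
        congr 1; field_simp

/-! ### Horizontal gradients and the Poincaré inequality along the center -/

/-- `A` and `B` are the horizontal derivatives of `g`, in integrated form. -/
structure HasHorGrad (g A B : HR → X) : Prop where
  a_eq : ∀ r h, g (amul r h) - g h = ∫ ρ in (0 : ℝ)..r, A (amul ρ h)
  b_eq : ∀ r h, g (bmul r h) - g h = ∫ ρ in (0 : ℝ)..r, B (bmul ρ h)

lemma conv_path {g A : HR → X} (hg : BddCont g) (hA : BddCont A) {T : ℝ → HR → HR}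
    (hT : Continuous (Function.uncurry T))
    (hcomm : ∀ r u h, T r (h.1, h.2.1, h.2.2 - u) = ((T r h).1, (T r h).2.1, (T r h).2.2 - u))
    (H : ∀ r h, g (T r h) - g h = ∫ ρ in (0 : ℝ)..r, A (T ρ h)) {ψ : ℝ → ℝ} (hψ : Integrable ψ)
    (r : ℝ) (h : HR) :
    conv ψ g (T r h) - conv ψ g h = ∫ ρ in (0 : ℝ)..r, conv ψ A (T ρ h) := by
  obtain ⟨hc, C, hC⟩ := hA
  have : conv ψ g (T r h) - conv ψ g h =
      ∫ u, ∫ ρ in (0 : ℝ)..r, ψ u • A (T ρ (h.1, h.2.1, h.2.2 - u)) := by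
    unfold conv
    rw [← integral_sub (hg.integrable_smul hψ _) (hg.integrable_smul hψ h)]
    congr 1; ext u
    rw [← smul_sub, ← hcomm, H, intervalIntegral.integral_smul]
  rw [this, ← intervalIntegral_integral_swap]
  · simp only [hcomm]; rfl
  · have : IsFiniteMeasure (volume.restrict (Set.uIoc 0 r)) := ⟨by simp [Set.uIoc]⟩
    have h1 : Integrable (fun p : ℝ × ℝ => (1 : ℝ) * ψ p.2)
        ((volume.restrict (Set.uIoc 0 r)).prod volume) :=
      Integrable.mul_prod (integrable_const (1 : ℝ)) hψ
    have h2 := h1.smul_bdd (f := fun p : ℝ × ℝ => A (T p.1 (h.1, h.2.1, h.2.2 - p.2))) C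
      (hc.comp (hT.comp (by fun_prop : Continuous fun p : ℝ × ℝ =>
        (p.1, ((h.1, h.2.1, h.2.2 - p.2) : HR))))).aestronglyMeasurable
      (Filter.Eventually.of_forall fun u => hC _)
    simpa [Function.uncurry_def] using! h2

lemma HasHorGrad.conv {g A B : HR → X} (H : HasHorGrad g A B) (hg : BddCont g) (hA : BddCont A)
    (hB : BddCont B) {ψ : ℝ → ℝ} (hψ : Integrable ψ) :
    HasHorGrad (conv ψ g) (conv ψ A) (conv ψ B) where
  a_eq := conv_path hg hA continuous_amul (fun _ _ _ => rfl) H.a_eq hψ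
  b_eq := conv_path hg hB continuous_bmul
    (fun r u h => by simp only [bmul, Prod.mk.injEq, true_and]; ring) H.b_eq hψ

lemma eLpNorm_path_le {g A : HR → X} (hA : Continuous A) {T : ℝ → HR → HR}
    (hT : Continuous (Function.uncurry T)) (hTm : ∀ r, MeasurePreserving (T r))
    (H : ∀ r h, g (T r h) - g h = ∫ ρ in (0 : ℝ)..r, A (T ρ h)) {p : ℝ} (hp : 1 ≤ p) (r : ℝ) :
    eLpNorm (fun h => g (T r h) - g h) (ENNReal.ofReal p) ≤
      ENNReal.ofReal |r| * eLpNorm A (ENNReal.ofReal p) := by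
  refine (eLpNorm_le_lintegral (μ := volume.restrict (Set.uIoc 0 r)) (w := fun _ => 1)
    (k := fun ρ h => A (T ρ h)) measurable_const (hA.comp hT).enorm.measurable hp
    fun h => ?_).trans_eq ?_
  · rw [H, intervalIntegral.intervalIntegral_eq_integral_uIoc, enorm_smul]
    simp only [one_mul]
    refine (mul_le_of_le_one_left' ?_).trans (enorm_integral_le_lintegral_enorm _)
    split_ifs <;> simp
  · simp_rw [eLpNorm_comp hA (hTm _)]
    simp [Set.uIoc, Real.volume_Ioc, max_sub_min_eq_abs]
    exact mul_comm _ _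

lemma vmul_eq_commutator (α β : ℝ) (h : HR) :
    vmul (α * β) h = bmul (-β) (amul (-α) (bmul β (amul α h))) := by
  simp only [vmul, bmul, amul, Prod.mk.injEq]
  refine ⟨by ring, by ring, by ring⟩

lemma HasHorGrad.eLpNorm_vmul_sub_le {g A B : HR → X} (H : HasHorGrad g A B) (hg : Continuous g)
    (hA : Continuous A) (hB : Continuous B) {p : ℝ} (hp : 1 ≤ p) (u : ℝ) :
    eLpNorm (fun h => g (vmul u h) - g h) (ENNReal.ofReal p) ≤
      ENNReal.ofReal √|u| *
        (2 * (eLpNorm A (ENNReal.ofReal p) + eLpNorm B (ENNReal.ofReal p))) := by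
  obtain ⟨α, β, hαβ, hα, hβ⟩ : ∃ α β : ℝ, α * β = u ∧ |α| = √|u| ∧ |β| = √|u| := by
    rcases le_total 0 u with h | h
    · exact ⟨√|u|, √|u|, by rw [Real.mul_self_sqrt (abs_nonneg u), abs_of_nonneg h], by simp, by simp⟩
    · exact ⟨√|u|, -√|u|, by rw [mul_neg, Real.mul_self_sqrt (abs_nonneg u), abs_of_nonpos h, neg_neg],
        by simp, by simp⟩
  have h1p : 1 ≤ ENNReal.ofReal p := by simpa using hp
  have hma := measurePreserving_amul
  have hmb := measurePreserving_bmul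
  have ca : ∀ r, Continuous (amul r) := fun r => by unfold amul; fun_prop
  have cb : ∀ r, Continuous (bmul r) := fun r => by unfold bmul; fun_prop
  have key : ∀ (T : ℝ → HR → HR) (r : ℝ) (S : HR → HR), Continuous (T r) → MeasurePreserving S →
      eLpNorm (fun h => g (T r (S h)) - g (S h)) (ENNReal.ofReal p) =
      eLpNorm (fun h => g (T r h) - g h) (ENNReal.ofReal p) := fun T r S hT hS =>
    eLpNorm_comp (g := fun h => g (T r h) - g h) ((hg.comp hT).sub hg) hS
  set S1 : HR → HR := amul α
  set S2 : HR → HR := fun h => bmul β (S1 h)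
  set S3 : HR → HR := fun h => amul (-α) (S2 h)
  have hS1 : MeasurePreserving S1 := hma α
  have hS2 : MeasurePreserving S2 := (hmb β).comp hS1
  have hS3 : MeasurePreserving S3 := (hma (-α)).comp hS2
  have c1 : Continuous S1 := ca α
  have c2 : Continuous S2 := (cb β).comp c1
  have c3 : Continuous S3 := (ca _).comp c2
  set N := fun k : HR → X => eLpNorm k (ENNReal.ofReal p)
  have e : (fun h => g (vmul u h) - g h) = fun h => (g (bmul (-β) (S3 h)) - g (S3 h)) +
      (g (amul (-α) (S2 h)) - g (S2 h)) + (g (bmul β (S1 h)) - g (S1 h)) + (g (amul α h) - g h) := by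
    ext h
    rw [← hαβ, vmul_eq_commutator]
    change g (bmul (-β) (S3 h)) - g h = (g (bmul (-β) (S3 h)) - g (S3 h)) +
      (g (S3 h) - g (S2 h)) + (g (S2 h) - g (S1 h)) + (g (S1 h) - g h)
    abel
  have m1 : Continuous fun h => g (amul α h) - g h := (hg.comp (ca _)).sub hg
  have m2 : Continuous fun h => g (bmul β (S1 h)) - g (S1 h) :=
    (hg.comp ((cb _).comp c1)).sub (hg.comp c1)
  have m3 : Continuous fun h => g (amul (-α) (S2 h)) - g (S2 h) :=
    (hg.comp ((ca _).comp c2)).sub (hg.comp c2)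
  have m4 : Continuous fun h => g (bmul (-β) (S3 h)) - g (S3 h) :=
    (hg.comp ((cb _).comp c3)).sub (hg.comp c3)
  have b1 := eLpNorm_path_le hA continuous_amul hma H.a_eq hp α
  have b2 := eLpNorm_path_le hB continuous_bmul hmb H.b_eq hp β
  have b3 := eLpNorm_path_le hA continuous_amul hma H.a_eq hp (-α)
  have b4 := eLpNorm_path_le hB continuous_bmul hmb H.b_eq hp (-β)
  rw [abs_neg] at b3 b4
  rw [← key bmul β S1 (cb _) hS1] at b2
  rw [← key amul (-α) S2 (ca _) hS2] at b3
  rw [← key bmul (-β) S3 (cb _) hS3] at b4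
  rw [hα] at b1 b3
  rw [hβ] at b2 b4
  rw [e]
  refine (eLpNorm_add_le ((m4.add m3).add m2).aestronglyMeasurable m1.aestronglyMeasurable
    h1p).trans ?_
  refine (add_le_add_left (eLpNorm_add_le (m4.add m3).aestronglyMeasurable
    m2.aestronglyMeasurable h1p) _).trans ?_
  refine (add_le_add_left (add_le_add_left (eLpNorm_add_le m4.aestronglyMeasurable
    m3.aestronglyMeasurable h1p) _) _).trans ?_
  refine (add_le_add (add_le_add (add_le_add b4 b3) b2) b1).trans_eq ?_
  ring

lemma HasHorGrad.eLpNorm_sub_conv_Pker_le [CompleteSpace X] {g A B : HR → X}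
    (H : HasHorGrad g A B) (hg : BddCont g)
    (hA : Continuous A) (hB : Continuous B) {p : ℝ} (hp : 1 ≤ p) {s : ℝ} (hs : 0 < s) :
    eLpNorm (fun h => g h - HR.conv (Pker s) g h) (ENNReal.ofReal p) ≤
      ENNReal.ofReal (cP * √s) *
        (2 * (eLpNorm A (ENNReal.ofReal p) + eLpNorm B (ENNReal.ofReal p))) := by
  have hm : Measurable fun u => ENNReal.ofReal (Pker s u) :=
    (continuous_Pker hs).measurable.ennreal_ofReal
  refine (eLpNorm_le_lintegral (μ := (volume : Measure ℝ)) (w := fun u => ENNReal.ofReal (Pker s u))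
    (k := fun u h => g (vmul (-u) h) - g h) hm
    (((hg.1.comp (continuous_vmul.comp (by fun_prop :
      Continuous fun x : ℝ × HR => (-x.1, x.2)))).sub
      (hg.1.comp continuous_snd)).enorm.measurable) hp fun h => ?_).trans ?_
  · have : g h - HR.conv (Pker s) g h =
        ∫ u, Pker s u • (g h - g (h.1, h.2.1, h.2.2 - u)) := by
      simp_rw [smul_sub]
      rw [integral_sub ((integrable_Pker hs).smul_const _)
        (hg.integrable_smul (integrable_Pker hs) h), integral_smul_const, integral_Pker hs, one_smul]
      rfl
    rw [this]
    refine (enorm_integral_le_lintegral_enorm _).trans_eq ?_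
    congr 1; ext u
    rw [enorm_smul, Real.enorm_of_nonneg (Pker_pos hs u).le]
    congr 1
    rw [← enorm_neg, neg_sub]
    simp only [vmul, sub_eq_add_neg]
  · have hm' : Measurable fun u => ENNReal.ofReal (Pker s u) * ENNReal.ofReal √|u| :=
      hm.mul (by fun_prop)
    rw [← lintegral_Pker_mul_sqrt hs, ← lintegral_mul_const _ hm']
    refine lintegral_mono fun u => ?_
    rw [mul_assoc]
    gcongr
    simpa using H.eLpNorm_vmul_sub_le hg.1 hA hB hp (-u)

end

end HR

namespace HR

open scoped ENNReal

section

variable {X : Type*} [NormedAddCommGroup X] [NormedSpace ℝ X]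

/-! ### Smooth compactly supported functions -/

lemma continuous_da {f : HR → X} (hf : ContDiff ℝ (⊤ : ℕ∞) f) : Continuous (da f) :=
  (hf.continuous_fderiv (by simp)).clm_apply continuous_const

lemma continuous_db {f : HR → X} (hf : ContDiff ℝ (⊤ : ℕ∞) f) : Continuous (db f) :=
  ((hf.continuous_fderiv (by simp)).clm_apply continuous_const).add
    (continuous_fst.smul ((hf.continuous_fderiv (by simp)).clm_apply continuous_const))

lemma hasCompactSupport_da {f : HR → X} (hf : HasCompactSupport f) : HasCompactSupport (da f) :=
  hf.fderiv_apply ℝ _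

lemma hasCompactSupport_db {f : HR → X} (hf : HasCompactSupport f) : HasCompactSupport (db f) :=
  HasCompactSupport.add (hf.fderiv_apply ℝ _)
    (HasCompactSupport.smul_left (f := fun h : HR => h.1) (hf.fderiv_apply ℝ _))

lemma hasHorGrad_of_contDiff [CompleteSpace X] {f : HR → X} (hf : ContDiff ℝ (⊤ : ℕ∞) f) :
    HasHorGrad f (da f) (db f) := by
  have hd : ∀ h, HasFDerivAt f (fderiv ℝ f h) h := fun h =>
    (hf.differentiable (by simp) h).hasFDerivAt
  constructor
  · intro r h
    have h1 : ∀ ρ ∈ Set.uIcc 0 r, HasDerivAt (fun ρ => f (amul ρ h)) (da f (amul ρ h)) ρ := by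
      intro ρ _
      have h2 : HasDerivAt (fun ρ => amul ρ h) ((1, 0, 0) : HR) ρ :=
        ((hasDerivAt_id ρ).const_add h.1).prodMk (hasDerivAt_const ρ _)
      exact (hd (amul ρ h)).comp_hasDerivAt ρ h2
    rw [intervalIntegral.integral_eq_sub_of_hasDerivAt h1]
    · simp [amul]
    · exact ((continuous_da hf).comp (continuous_amul.comp
        (by fun_prop : Continuous fun ρ : ℝ => (ρ, h)))).intervalIntegrable _ _
  · intro r h
    have h1 : ∀ ρ ∈ Set.uIcc 0 r, HasDerivAt (fun ρ => f (bmul ρ h)) (db f (bmul ρ h)) ρ := by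
      intro ρ _
      have h2 : HasDerivAt (fun ρ => bmul ρ h) ((0, 1, h.1 * 1) : HR) ρ :=
        (hasDerivAt_const ρ _).prodMk (((hasDerivAt_id ρ).const_add h.2.1).prodMk
          (((hasDerivAt_id ρ).const_mul h.1).const_add h.2.2))
      have h3 := (hd (bmul ρ h)).comp_hasDerivAt ρ h2
      have e : ((0, 1, h.1 * 1) : HR) = (0, 1, 0) + h.1 • (0, 0, 1) := by simp
      rw [e, map_add, map_smul] at h3
      exact h3
    rw [intervalIntegral.integral_eq_sub_of_hasDerivAt h1]
    · simp [bmul]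
    · exact ((continuous_db hf).comp (continuous_bmul.comp
        (by fun_prop : Continuous fun ρ : ℝ => (ρ, h)))).intervalIntegrable _ _

/-! ### Regularity in the scale parameter -/

lemma abs_Qker_le_of_le {σ s : ℝ} (hσ : 0 < σ) (h : σ ≤ s) (u : ℝ) :
    |Qker s u| ≤ Pker σ u / σ := by
  have hs : 0 < s := hσ.trans_le h
  refine (abs_Qker_le hs u).trans ?_
  have e : ∀ r : ℝ, 0 < r → Pker r u / r = 1 / (Real.pi * (r ^ 2 + u ^ 2)) := fun r hr => by
    unfold Pker; field_simp
  rw [e s hs, e σ hσ]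
  gcongr

lemma continuousAt_conv_Qker {g : HR → X} (hg : BddCont g) {s : ℝ} (hs : 0 < s) (h : HR) :
    ContinuousAt (fun x : ℝ × HR => conv (Qker x.1) g x.2) (s, h) := by
  obtain ⟨hc, C, hC⟩ := id hg
  have ev : ∀ᶠ x : ℝ × HR in nhds (s, h), s / 2 < x.1 :=
    continuous_fst.continuousAt.eventually (lt_mem_nhds (half_lt_self hs))
  refine continuousAt_of_dominated (bound := fun u => Pker (s / 2) u / (s / 2) * C) ?_ ?_
    (((integrable_Pker (half_pos hs)).div_const _).mul_const C) ?_
  · filter_upwards [ev] with x hx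
    exact (hg.integrable_smul (integrable_Qker ((half_pos hs).trans hx)) x.2).aestronglyMeasurable
  · filter_upwards [ev] with x hx
    refine Filter.Eventually.of_forall fun u => ?_
    rw [norm_smul]
    exact mul_le_mul (abs_Qker_le_of_le (half_pos hs) hx.le u) (hC _) (norm_nonneg _)
      (div_nonneg (Pker_pos (half_pos hs) u).le (half_pos hs).le)
  · refine Filter.Eventually.of_forall fun u => ContinuousAt.smul ?_ ?_
    · unfold Qker
      refine ContinuousAt.div (by fun_prop) (by fun_prop) ?_
      have := Real.pi_pos
      positivity
    · exact (hc.comp (by fun_prop : Continuous fun x : ℝ × HR =>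
        ((x.2.1, x.2.2.1, x.2.2.2 - u) : HR))).continuousAt

lemma hasDerivAt_conv_Pker {g : HR → X} (hg : BddCont g) {s : ℝ} (hs : 0 < s) (h : HR) :
    HasDerivAt (fun s => conv (Pker s) g h) (conv (Qker s) g h) s := by
  obtain ⟨hc, C, hC⟩ := id hg
  refine (hasDerivAt_integral_of_dominated_loc_of_deriv_le
    (F := fun s u => Pker s u • g (h.1, h.2.1, h.2.2 - u))
    (F' := fun s u => Qker s u • g (h.1, h.2.1, h.2.2 - u))
    (bound := fun u => Pker (s / 2) u / (s / 2) * C)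
    (Ioi_mem_nhds (half_lt_self hs)) ?_ (hg.integrable_smul (integrable_Pker hs) h)
    (hg.integrable_smul (integrable_Qker hs) h).aestronglyMeasurable ?_
    (((integrable_Pker (half_pos hs)).div_const _).mul_const C) ?_).2
  · filter_upwards [Ioi_mem_nhds hs] with x hx
    exact (hg.integrable_smul (integrable_Pker hx) h).aestronglyMeasurable
  · refine Filter.Eventually.of_forall fun u x hx => ?_
    rw [norm_smul]
    exact mul_le_mul (abs_Qker_le_of_le (half_pos hs) (le_of_lt hx) u) (hC _) (norm_nonneg _)
      (div_nonneg (Pker_pos (half_pos hs) u).le (half_pos hs).le)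
  · refine Filter.Eventually.of_forall fun u x hx => ?_
    exact (hasDerivAt_Pker ((half_pos hs).trans hx) u).smul_const _

/-! ### The half-doubling estimate -/

lemma eLpNorm_half_diff_le [CompleteSpace X] {f A B : HR → X} (H : HasHorGrad f A B)
    (hf : BddCont f) (hA : BddCont A) (hB : BddCont B) {p : ℝ} (hp : 1 ≤ p) {ε t : ℝ} (hε : 0 < ε)
    (ht : ε ≤ t) :
    eLpNorm (fun h => (conv (Pker t) f h - (1 / 2 : ℝ) • conv (Pker (2 * t)) f h) -
        (conv (Pker ε) f h - (1 / 2 : ℝ) • conv (Pker (2 * ε)) f h)) (ENNReal.ofReal p) ≤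
      ∫⁻ s in Set.Ioc ε t, ENNReal.ofReal (cP * √s) *
        (2 * (eLpNorm (conv (Qker s) A) (ENNReal.ofReal p) +
          eLpNorm (conv (Qker s) B) (ENNReal.ofReal p))) := by
  have hder : ∀ h, ∀ s ∈ Set.uIcc ε t, HasDerivAt
      (fun s => conv (Pker s) f h - (1 / 2 : ℝ) • conv (Pker (2 * s)) f h)
      (conv (Qker s) f h - conv (Qker (2 * s)) f h) s := by
    intro h s hs
    rw [Set.uIcc_of_le ht] at hs
    have hs0 : 0 < s := hε.trans_le hs.1
    have h1 := hasDerivAt_conv_Pker hf hs0 h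
    have h2 := ((hasDerivAt_conv_Pker hf (mul_pos two_pos hs0) h).scomp s
      ((hasDerivAt_id s).const_mul 2)).const_smul (1 / 2 : ℝ)
    have h3 := h1.sub h2
    rw [mul_one, smul_smul] at h3
    norm_num at h3
    norm_num
    exact h3
  set k : ℝ → HR → X := fun s h =>
    conv (Qker (max ε s)) f h - conv (Qker (2 * max ε s)) f h with hk
  have hQc : Continuous fun x : {s : ℝ // 0 < s} × HR => conv (Qker x.1) f x.2 := by
    refine continuous_iff_continuousAt.2 fun x => ?_
    exact (continuousAt_conv_Qker hf x.1.2 x.2).comp (f := fun x : {s : ℝ // 0 < s} × HR =>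
      ((x.1 : ℝ), x.2)) (by fun_prop)
  have hmax : ∀ s, 0 < max ε s := fun s => hε.trans_le (le_max_left _ _)
  have hkc : Continuous (Function.uncurry k) := by
    refine Continuous.sub ?_ ?_
    · exact hQc.comp (f := fun x : ℝ × HR => ((⟨max ε x.1, hmax _⟩ : {s : ℝ // 0 < s}), x.2))
        (by fun_prop)
    · exact hQc.comp (f := fun x : ℝ × HR =>
        ((⟨2 * max ε x.1, mul_pos two_pos (hmax _)⟩ : {s : ℝ // 0 < s}), x.2)) (by fun_prop)
  refine (eLpNorm_le_lintegral (μ := volume.restrict (Set.Ioc ε t)) (w := fun _ => 1)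
    (k := k) measurable_const hkc.enorm.measurable hp fun h => ?_).trans ?_
  · rw [← intervalIntegral.integral_eq_sub_of_hasDerivAt
      (f := fun s => conv (Pker s) f h - (1 / 2 : ℝ) • conv (Pker (2 * s)) f h)
      (f' := fun s => conv (Qker s) f h - conv (Qker (2 * s)) f h) (hder h),
      intervalIntegral.integral_of_le ht]
    · simp only [one_mul]
      refine (enorm_integral_le_lintegral_enorm _).trans_eq ?_
      refine setLIntegral_congr_fun measurableSet_Ioc fun s hs => ?_
      simp only [hk, max_eq_right hs.1.le]
    · have hc : Continuous fun s => k s h := hkc.comp (by fun_prop : Continuous fun s : ℝ => (s, h))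
      refine (hc.intervalIntegrable ε t).congr ?_
      intro s hs
      rw [Set.uIoc_of_le ht] at hs
      simp only [hk, max_eq_right hs.1.le]
  · refine setLIntegral_mono' measurableSet_Ioc fun s hs => ?_
    have hs0 : 0 < s := hε.trans hs.1
    rw [one_mul]
    have hQ := integrable_Qker hs0
    refine le_trans (le_of_eq ?_) ((H.conv hf hA hB hQ).eLpNorm_sub_conv_Pker_le (hf.conv hQ)
      (hA.conv hQ).1 (hB.conv hQ).1 hp hs0)
    congr 1; ext h
    rw [hf.conv_Pker_Qker hs0, ← two_mul]
    simp only [hk, max_eq_right hs.1.le]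

end

end HR

namespace HR

open scoped ENNReal

lemma le_tsum_of_le_half_add {e G : ℝ → ℝ≥0∞} {K : ℝ≥0∞} (hK : K ≠ ⊤)
    (h : ∀ t, 0 < t → e t ≤ 2⁻¹ * e (2 * t) + G t) (hb : ∀ t, 0 < t → e t ≤ K) {t : ℝ}
    (ht : 0 < t) : e t ≤ ∑' k : ℕ, 2⁻¹ ^ k * G (2 ^ k * t) := by
  have step : ∀ n : ℕ, e t ≤ 2⁻¹ ^ n * e (2 ^ n * t) +
      ∑ k ∈ Finset.range n, 2⁻¹ ^ k * G (2 ^ k * t) := by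
    intro n
    induction n with
    | zero => simp
    | succ n ih =>
      refine ih.trans ?_
      rw [Finset.sum_range_succ, pow_succ, pow_succ', mul_assoc (2⁻¹ ^ n), mul_assoc (2 : ℝ)]
      calc _ ≤ 2⁻¹ ^ n * (2⁻¹ * e (2 * (2 ^ n * t)) + G (2 ^ n * t)) +
            ∑ k ∈ Finset.range n, 2⁻¹ ^ k * G (2 ^ k * t) := by
            gcongr; exact h _ (by positivity)
        _ = _ := by ring
  have lim : Filter.Tendsto (fun n : ℕ => 2⁻¹ ^ n * K + ∑' k : ℕ, 2⁻¹ ^ k * G (2 ^ k * t))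
      Filter.atTop (nhds (∑' k : ℕ, 2⁻¹ ^ k * G (2 ^ k * t))) := by
    have h1 : Filter.Tendsto (fun n : ℕ => (2⁻¹ : ℝ≥0∞) ^ n * K) Filter.atTop (nhds (0 * K)) :=
      ENNReal.Tendsto.mul_const (ENNReal.tendsto_pow_atTop_nhds_zero_of_lt_one (by simp))
        (Or.inr hK)
    simpa using h1.add_const (∑' k : ℕ, 2⁻¹ ^ k * G (2 ^ k * t))
  refine ge_of_tendsto' lim fun n => (step n).trans ?_
  gcongr
  · exact hb _ (by positivity)
  · exact ENNReal.sum_le_tsum _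

lemma le_tsum_of_le_double_add {a e : ℝ → ℝ≥0∞} {K : ℝ≥0∞} (hK : K ≠ ⊤) {t : ℝ}
    (h2 : ∀ s, 0 < s → a s ≤ a (2 * s) + ENNReal.ofReal (t / s) * e s)
    (h1 : ∀ s, 0 < s → a s ≤ ENNReal.ofReal (t / s) * K) (ht : 0 < t) :
    a t ≤ ∑' k : ℕ, 2⁻¹ ^ k * e (2 ^ k * t) := by
  have hmul : ∀ s, 0 < s → ENNReal.ofReal (s / t) * ENNReal.ofReal (t / s) = 1 := fun s hs => by
    rw [← ENNReal.ofReal_mul (by positivity), ← ENNReal.ofReal_one]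
    congr 1; field_simp
  have main := le_tsum_of_le_half_add (e := fun s => ENNReal.ofReal (s / t) * a s)
    (G := e) hK (fun s hs => ?_) (fun s hs => (mul_le_mul_right (h1 s hs) _).trans_eq ?_) ht
  · simpa [div_self ht.ne'] using main
  · refine (mul_le_mul_right (h2 s hs) _).trans_eq ?_
    rw [mul_add, ← mul_assoc, hmul s hs, one_mul, mul_div_assoc,
      ENNReal.ofReal_mul two_pos.le, ← mul_assoc, ← mul_assoc, ENNReal.ofReal_ofNat,
      ENNReal.inv_mul_cancel (by simp) (by simp), one_mul]
  · rw [← mul_assoc, hmul s hs, one_mul]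

section

variable {X : Type*} [NormedAddCommGroup X] [NormedSpace ℝ X]

/-- The `L_p` distance of `f` to its central Poisson average at scale `t`. -/
noncomputable def poissonErr (p : ℝ) (f : HR → X) (t : ℝ) : ℝ≥0∞ :=
  eLpNorm (fun h => f h - conv (Pker t) f h) (ENNReal.ofReal p)

/-- The contribution of the scales below `t` to the square-root weighted horizontal energy. -/
noncomputable def smallScales (p : ℝ) (A B : HR → X) (t : ℝ) : ℝ≥0∞ :=
  ∫⁻ s in Set.Ioc 0 t, ENNReal.ofReal (cP * √s) *
    (2 * (eLpNorm (conv (Qker s) A) (ENNReal.ofReal p) +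
      eLpNorm (conv (Qker s) B) (ENNReal.ofReal p)))

lemma poissonErr_le_two_mul {f : HR → X} (hf : BddCont f) {p : ℝ} (hp : 1 ≤ p) {t : ℝ}
    (ht : 0 < t) : poissonErr p f t ≤ 2 * eLpNorm f (ENNReal.ofReal p) := by
  refine (eLpNorm_sub_le hf.1.aestronglyMeasurable
    (hf.conv (integrable_Pker ht)).1.aestronglyMeasurable (by simpa using hp)).trans ?_
  rw [two_mul]
  gcongr
  exact eLpNorm_conv_Pker_le hf ht hp

lemma poissonErr_le_half_add [CompleteSpace X] {f A B : HR → X} (H : HasHorGrad f A B)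
    (hf : BddCont f) (hA : BddCont A) (hB : BddCont B) {p : ℝ} (hp : 1 ≤ p)
    (hAt : eLpNorm A (ENNReal.ofReal p) ≠ ⊤) (hBt : eLpNorm B (ENNReal.ofReal p) ≠ ⊤)
    {t : ℝ} (ht : 0 < t) :
    poissonErr p f t ≤ 2⁻¹ * poissonErr p f (2 * t) + smallScales p A B t := by
  set M := 2 * (eLpNorm A (ENNReal.ofReal p) + eLpNorm B (ENNReal.ofReal p)) with hM
  have hMt : M ≠ ⊤ := ENNReal.mul_ne_top (by simp) (ENNReal.add_ne_top.2 ⟨hAt, hBt⟩)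
  have h1p : 1 ≤ ENNReal.ofReal p := by simpa using hp
  set r : ℝ → ℝ≥0∞ := fun ε =>
    ENNReal.ofReal (cP * √ε) * M + 2⁻¹ * (ENNReal.ofReal (cP * √(2 * ε)) * M)
  have hr : Filter.Tendsto (fun ε => r ε + (2⁻¹ * poissonErr p f (2 * t) + smallScales p A B t))
      (nhdsWithin 0 (Set.Ioi 0))
      (nhds (2⁻¹ * poissonErr p f (2 * t) + smallScales p A B t)) := by
    have hc : ∀ c : ℝ, Filter.Tendsto (fun ε => ENNReal.ofReal (cP * √(c * ε)) * M)
        (nhdsWithin 0 (Set.Ioi 0)) (nhds 0) := by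
      intro c
      have h1 : Filter.Tendsto (fun ε => cP * √(c * ε)) (nhdsWithin 0 (Set.Ioi 0))
          (nhds (cP * √(c * 0))) :=
        ((by fun_prop : Continuous fun ε => cP * √(c * ε)).tendsto 0).mono_left nhdsWithin_le_nhds
      simpa using ENNReal.Tendsto.mul_const (ENNReal.tendsto_ofReal h1) (Or.inr hMt)
    have h2 := ((hc 1).add (ENNReal.Tendsto.const_mul (a := 2⁻¹) (hc 2) (Or.inr (by simp)))).add_const
      (2⁻¹ * poissonErr p f (2 * t) + smallScales p A B t)
    simpa [r] using h2
  refine ge_of_tendsto hr ?_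
  filter_upwards [Ioc_mem_nhdsGT ht] with ε hε
  have hE : ∀ {s : ℝ}, 0 < s → Continuous fun h => f h - conv (Pker s) f h := fun hs =>
    hf.1.sub (hf.conv (integrable_Pker hs)).1
  have hε2 : 0 < 2 * ε := by linarith [hε.1]
  have ht2 : 0 < 2 * t := by linarith
  set K : HR → X := fun h => (conv (Pker t) f h - (1 / 2 : ℝ) • conv (Pker (2 * t)) f h) -
        (conv (Pker ε) f h - (1 / 2 : ℝ) • conv (Pker (2 * ε)) f h) with hKdef
  have hKc : Continuous K :=
    ((hf.conv (integrable_Pker ht)).1.sub ((hf.conv (integrable_Pker ht2)).1.const_smul _)).sub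
      ((hf.conv (integrable_Pker hε.1)).1.sub ((hf.conv (integrable_Pker hε2)).1.const_smul _))
  have hKle : eLpNorm K (ENNReal.ofReal p) ≤ smallScales p A B t :=
    (eLpNorm_half_diff_le H hf hA hB hp hε.1 hε.2).trans
      (lintegral_mono_set (Set.Ioc_subset_Ioc_left hε.1.le))
  have half : ∀ g : HR → X, eLpNorm ((1 / 2 : ℝ) • g) (ENNReal.ofReal p) =
      2⁻¹ * eLpNorm g (ENNReal.ofReal p) := fun g => by
    rw [eLpNorm_const_smul]
    congr 1
    rw [Real.enorm_of_nonneg (by norm_num), one_div, ENNReal.ofReal_inv_of_pos two_pos]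
    simp
  have e : (fun h => f h - conv (Pker t) f h) =
      (((fun h => f h - conv (Pker ε) f h) -
        (1 / 2 : ℝ) • (fun h => f h - conv (Pker (2 * ε)) f h)) +
        (1 / 2 : ℝ) • (fun h => f h - conv (Pker (2 * t)) f h)) - K := by
    ext h
    simp only [hKdef, Pi.sub_apply, Pi.add_apply, Pi.smul_apply, smul_sub]
    abel
  unfold poissonErr
  rw [e]
  have c1 := (hE hε.1).aestronglyMeasurable (μ := (volume : Measure HR))
  have c2 := ((hE hε2).const_smul (1 / 2 : ℝ)).aestronglyMeasurable (μ := (volume : Measure HR))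
  have c3 := ((hE ht2).const_smul (1 / 2 : ℝ)).aestronglyMeasurable (μ := (volume : Measure HR))
  refine (eLpNorm_sub_le ((c1.sub c2).add c3) hKc.aestronglyMeasurable h1p).trans ?_
  rw [← add_assoc]
  refine add_le_add ((eLpNorm_add_le (c1.sub c2) c3 h1p).trans ?_) hKle
  rw [half]
  refine add_le_add_left ((eLpNorm_sub_le c1 c2 h1p).trans ?_) _
  rw [half]
  have hH := @HasHorGrad.eLpNorm_sub_conv_Pker_le _ _ _ _ _ _ _ H hf hA.1 hB.1 _ hp
  exact add_le_add (hH hε.1) (by gcongr; exact hH hε2)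

lemma eLpNorm_vmul_conv_Pker_le_double_add [CompleteSpace X] {f : HR → X}
    (hf : BddCont f) {p : ℝ} (hp : 1 ≤ p) {s t : ℝ} (hs : 0 < s) (ht : 0 < t) :
    eLpNorm (fun h => conv (Pker s) f (vmul t h) - conv (Pker s) f h) (ENNReal.ofReal p) ≤
      eLpNorm (fun h => conv (Pker (2 * s)) f (vmul t h) - conv (Pker (2 * s)) f h)
        (ENNReal.ofReal p) + ENNReal.ofReal (t / s) * poissonErr p f s := by
  have h1p : 1 ≤ ENNReal.ofReal p := by simpa using hp
  have hs2 : 0 < 2 * s := by linarith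
  have hPs := hf.conv (integrable_Pker hs)
  have cv : Continuous (vmul t) := by unfold vmul; fun_prop
  unfold poissonErr
  obtain ⟨E, hE⟩ : ∃ E : HR → X, E = fun h => f h - conv (Pker s) f h := ⟨_, rfl⟩
  have hEb : BddCont E := hE ▸ hf.sub hPs
  have e1 : ∀ h, conv (Pker s) f h = conv (Pker (2 * s)) f h + conv (Pker s) E h := fun h => by
    rw [hE, conv_sub hf hPs (integrable_Pker hs), hf.conv_Pker_Pker hs, two_mul]
    abel
  have c1 : Continuous (conv (Pker (2 * s)) f) := (hf.conv (integrable_Pker hs2)).1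
  have c2 : Continuous (conv (Pker s) E) := (hEb.conv (integrable_Pker hs)).1
  have e2 : (fun h => conv (Pker s) f (vmul t h) - conv (Pker s) f h) =
      (fun h => conv (Pker (2 * s)) f (vmul t h) - conv (Pker (2 * s)) f h) +
      (fun h => conv (Pker s) E (vmul t h) - conv (Pker s) E h) := by
    ext h
    rw [Pi.add_apply, e1, e1 h]
    abel
  rw [e2, ← hE]
  have c3 := ((c1.comp cv).sub c1).aestronglyMeasurable (μ := (volume : Measure HR))
  have c4 := ((c2.comp cv).sub c2).aestronglyMeasurable (μ := (volume : Measure HR))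
  exact (eLpNorm_add_le c3 c4 h1p).trans
    (add_le_add_right (eLpNorm_vmul_conv_Pker_sub_le hEb hs ht.le hp) _)

lemma eLpNorm_vmul_conv_Pker_self_le [CompleteSpace X] {f : HR → X}
    (hf : BddCont f) {p : ℝ} (hp : 1 ≤ p) (hft : eLpNorm f (ENNReal.ofReal p) ≠ ⊤)
    {t : ℝ} (ht : 0 < t) :
    eLpNorm (fun h => conv (Pker t) f (vmul t h) - conv (Pker t) f h) (ENNReal.ofReal p) ≤
      ∑' k : ℕ, 2⁻¹ ^ k * poissonErr p f (2 ^ k * t) := by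
  have key := @le_tsum_of_le_double_add
    (fun s => eLpNorm (fun h => conv (Pker s) f (vmul t h) - conv (Pker s) f h)
      (ENNReal.ofReal p)) (poissonErr p f) _ hft t
  have key' := key fun s hs => eLpNorm_vmul_conv_Pker_le_double_add hf hp hs ht
  have key'' := key' fun s hs => eLpNorm_vmul_conv_Pker_sub_le hf hs ht.le hp
  exact key'' ht

lemma eLpNorm_vmul_sub_le_tsum [CompleteSpace X] {f : HR → X}
    (hf : BddCont f) {p : ℝ} (hp : 1 ≤ p) (hft : eLpNorm f (ENNReal.ofReal p) ≠ ⊤)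
    {t : ℝ} (ht : 0 < t) :
    eLpNorm (fun h => f (vmul t h) - f h) (ENNReal.ofReal p) ≤
      3 * ∑' k : ℕ, 2⁻¹ ^ k * poissonErr p f (2 ^ k * t) := by
  have h1p : 1 ≤ ENNReal.ofReal p := by simpa using hp
  have hP := hf.conv (integrable_Pker ht)
  have hE : Continuous fun h => f h - conv (Pker t) f h := hf.1.sub hP.1
  have cv : Continuous (vmul t) := by unfold vmul; fun_prop
  have e : (fun h => f (vmul t h) - f h) =
      ((fun h => f (vmul t h) - conv (Pker t) f (vmul t h)) +
        (fun h => conv (Pker t) f (vmul t h) - conv (Pker t) f h)) -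
        (fun h => f h - conv (Pker t) f h) := by
    ext h
    simp only [Pi.sub_apply, Pi.add_apply]
    abel
  have h0 : poissonErr p f t ≤ ∑' k : ℕ, 2⁻¹ ^ k * poissonErr p f (2 ^ k * t) := by
    simpa using ENNReal.le_tsum (f := fun k : ℕ => 2⁻¹ ^ k * poissonErr p f (2 ^ k * t)) 0
  rw [e]
  refine (eLpNorm_sub_le (((hE.comp cv).add ((hP.1.comp cv).sub hP.1))).aestronglyMeasurable
    hE.aestronglyMeasurable h1p).trans ?_
  refine (add_le_add_left (eLpNorm_add_le (hE.comp cv).aestronglyMeasurable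
    ((hP.1.comp cv).sub hP.1).aestronglyMeasurable h1p) _).trans ?_
  refine (add_le_add (add_le_add (((eLpNorm_comp hE (measurePreserving_vmul t)).trans_le h0))
    (eLpNorm_vmul_conv_Pker_self_le hf hp hft ht)) h0).trans_eq ?_
  ring

end

end HR

namespace HR

open scoped ENNReal

/-! ### Weighted norms on the half-line -/

lemma lintegral_comp_mul_left_real {g : ℝ → ℝ≥0∞} (hg : Measurable g) {a : ℝ} (ha : 0 < a) :
    ∫⁻ x, g (a * x) = ENNReal.ofReal a⁻¹ * ∫⁻ x, g x := by
  rw [← lintegral_map hg (measurable_const_mul a), Real.map_volume_mul_left ha.ne',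
    lintegral_smul_measure, abs_of_pos (inv_pos.2 ha), smul_eq_mul]

/-- The measure `t^{-1-q/2} dt` on the half-line. -/
noncomputable def besovMeasure (q : ℝ) : Measure ℝ :=
  (volume.restrict (Set.Ioi 0)).withDensity fun t => ENNReal.ofReal (t ^ (-1 - q / 2))

instance (q : ℝ) : SFinite (besovMeasure q) := by unfold besovMeasure; infer_instance

lemma lintegral_besovMeasure {q : ℝ} {g : ℝ → ℝ≥0∞} (hg : Measurable g) :
    ∫⁻ t, g t ∂(besovMeasure q) =
      ∫⁻ t in Set.Ioi 0, ENNReal.ofReal (t ^ (-1 - q / 2)) * g t := by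
  unfold besovMeasure
  rw [lintegral_withDensity_eq_lintegral_mul _ (by fun_prop) hg]
  rfl

lemma ae_besovMeasure_pos (q : ℝ) : ∀ᵐ t ∂(besovMeasure q), 0 < t :=
  (withDensity_absolutelyContinuous _ _).ae_le (ae_restrict_mem measurableSet_Ioi)

/-- The Besov-type norm `(∫₀^∞ F(t)^q dt/t^{1+q/2})^{1/q}`. -/
noncomputable def besovNorm (q : ℝ) (F : ℝ → ℝ≥0∞) : ℝ≥0∞ :=
  (∫⁻ t, F t ^ q ∂(besovMeasure q)) ^ (1 / q)

lemma besovNorm_mono {q : ℝ} (hq : 1 ≤ q) {F G : ℝ → ℝ≥0∞} (h : ∀ t, 0 < t → F t ≤ G t) :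
    besovNorm q F ≤ besovNorm q G := by
  unfold besovNorm
  refine ENNReal.rpow_le_rpow (lintegral_mono_ae ?_) (by positivity)
  filter_upwards [ae_besovMeasure_pos q] with t ht
  exact ENNReal.rpow_le_rpow (h t ht) (by positivity)

lemma besovNorm_const_mul {q : ℝ} (hq : 1 ≤ q) {F : ℝ → ℝ≥0∞} (hF : Measurable F) (c : ℝ≥0∞) :
    besovNorm q (fun t => c * F t) = c * besovNorm q F := by
  unfold besovNorm
  simp_rw [ENNReal.mul_rpow_of_nonneg _ _ (by positivity : 0 ≤ q)]
  rw [lintegral_const_mul _ (hF.pow_const q), ENNReal.mul_rpow_of_nonneg _ _ (by positivity),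
    ← ENNReal.rpow_mul, mul_one_div_cancel (by positivity), ENNReal.rpow_one]

lemma besovNorm_comp_mul {q : ℝ} (hq : 1 ≤ q) {F : ℝ → ℝ≥0∞} (hF : Measurable F) {a : ℝ}
    (ha : 0 < a) : besovNorm q (fun t => F (a * t)) = ENNReal.ofReal √a * besovNorm q F := by
  have hq0 : 0 < q := by linarith
  set g : ℝ → ℝ≥0∞ := (Set.Ioi 0).indicator fun t => ENNReal.ofReal (t ^ (-1 - q / 2)) * F t ^ q
    with hg
  have hgm : Measurable g :=
    (((by fun_prop : Measurable fun t : ℝ => ENNReal.ofReal (t ^ (-1 - q / 2))).mul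
      (hF.pow_const q))).indicator measurableSet_Ioi
  have hma : Measurable fun t => F (a * t) := hF.comp (measurable_const_mul a)
  have key : ∫⁻ t, F (a * t) ^ q ∂(besovMeasure q) =
      ENNReal.ofReal (a ^ (q / 2)) * ∫⁻ t, F t ^ q ∂(besovMeasure q) := by
    rw [lintegral_besovMeasure (hF.pow_const q),
      lintegral_besovMeasure (hma.pow_const q),
      ← lintegral_indicator measurableSet_Ioi, ← lintegral_indicator measurableSet_Ioi, ← hg]
    have e : (Set.Ioi (0 : ℝ)).indicator
        (fun t => ENNReal.ofReal (t ^ (-1 - q / 2)) * F (a * t) ^ q) =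
        fun t => ENNReal.ofReal (a ^ (1 + q / 2)) * g (a * t) := by
      ext t
      by_cases ht : 0 < t
      · have hat : 0 < a * t := mul_pos ha ht
        rw [hg, Set.indicator_of_mem (Set.mem_Ioi.2 ht), Set.indicator_of_mem (Set.mem_Ioi.2 hat),
          ← mul_assoc, ← ENNReal.ofReal_mul (by positivity), Real.mul_rpow ha.le ht.le,
          ← mul_assoc, ← Real.rpow_add ha]
        congr 3
        simp
      · have hat : ¬ 0 < a * t := by simpa [mul_pos_iff_of_pos_left ha] using ht
        rw [hg, Set.indicator_of_notMem (by simpa using ht),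
          Set.indicator_of_notMem (by simpa using hat), mul_zero]
    rw [e, lintegral_const_mul _ (by fun_prop),
      lintegral_comp_mul_left_real hgm ha, ← mul_assoc, ← ENNReal.ofReal_mul (by positivity)]
    congr 2
    rw [Real.rpow_add ha, Real.rpow_one]
    field_simp
  unfold besovNorm
  rw [key, ENNReal.mul_rpow_of_nonneg _ _ (by positivity),
    ENNReal.ofReal_rpow_of_nonneg (by positivity) (by positivity), ← Real.rpow_mul ha.le,
    Real.sqrt_eq_rpow]
  congr 3
  field_simp

lemma besovNorm_lintegral_le {α : Type*} [MeasurableSpace α] {μ : Measure α} [SFinite μ]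
    {F : α → ℝ → ℝ≥0∞} (hF : Measurable (Function.uncurry F)) {q : ℝ} (hq : 1 ≤ q) :
    besovNorm q (fun t => ∫⁻ a, F a t ∂μ) ≤ ∫⁻ a, besovNorm q (F a) ∂μ :=
  lintegral_rpow_lintegral_le hF hq

lemma besovNorm_dyadic_sum_le {q : ℝ} (hq : 1 ≤ q) {F : ℝ → ℝ≥0∞} (hF : Measurable F) :
    besovNorm q (fun t => ∑' k : ℕ, 2⁻¹ ^ k * F (2 ^ k * t)) ≤ 4 * besovNorm q F := by
  have hm : ∀ k : ℕ, Measurable fun t => F (2 ^ k * t) := fun k =>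
    hF.comp (measurable_const_mul _)
  have hu : Measurable (Function.uncurry fun (k : ℕ) (t : ℝ) => 2⁻¹ ^ k * F (2 ^ k * t)) :=
    measurable_from_prod_countable_right fun k => (hm k).const_mul (2⁻¹ ^ k)
  have h := besovNorm_lintegral_le (μ := Measure.count) hu hq
  simp_rw [lintegral_count] at h
  refine h.trans ?_
  have hr : (2⁻¹ : ℝ≥0∞) * ENNReal.ofReal √2 ≤ ENNReal.ofReal (3 / 4) := by
    have : (2⁻¹ : ℝ≥0∞) = ENNReal.ofReal 2⁻¹ := by
      rw [ENNReal.ofReal_inv_of_pos two_pos, ENNReal.ofReal_ofNat]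
    rw [this, ← ENNReal.ofReal_mul (by norm_num)]
    refine ENNReal.ofReal_le_ofReal ?_
    have : √2 ≤ 3 / 2 := by
      rw [Real.sqrt_le_left (by norm_num)]; norm_num
    linarith
  calc ∑' k : ℕ, besovNorm q (fun t => 2⁻¹ ^ k * F (2 ^ k * t))
      ≤ ∑' k : ℕ, ENNReal.ofReal (3 / 4) ^ k * besovNorm q F := by
        refine ENNReal.tsum_le_tsum fun k => ?_
        rw [besovNorm_const_mul hq (hm k), besovNorm_comp_mul hq hF (by positivity), ← mul_assoc]
        gcongr
        refine le_trans (le_of_eq ?_) (pow_le_pow_left' hr k)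
        have h2 : √(2 ^ k : ℝ) = √2 ^ k := by
          rw [show (2 : ℝ) ^ k = (√2 ^ k) ^ 2 by
            rw [← pow_mul, mul_comm, pow_mul, Real.sq_sqrt two_pos.le],
            Real.sqrt_sq (by positivity)]
        rw [mul_pow, ← ENNReal.ofReal_pow (Real.sqrt_nonneg _), h2]
    _ = 4 * besovNorm q F := by
        rw [ENNReal.tsum_mul_right, ENNReal.tsum_geometric]
        congr 1
        rw [← ENNReal.ofReal_one, ← ENNReal.ofReal_sub _ (by norm_num),
          ← ENNReal.ofReal_inv_of_pos (by norm_num)]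
        norm_num

/-- A Hardy inequality. -/
lemma besovNorm_lintegral_sqrt_le {q : ℝ} (hq : 1 ≤ q) {φ : ℝ → ℝ≥0∞} (hφ : Measurable φ) :
    besovNorm q (fun t => ∫⁻ s in Set.Ioc 0 t, ENNReal.ofReal √s * φ s) ≤
      2 * besovNorm q (fun t => ENNReal.ofReal (t * √t) * φ t) := by
  set F : ℝ → ℝ≥0∞ := fun t => ENNReal.ofReal (t * √t) * φ t with hF
  have hFm : Measurable F := by fun_prop
  have hsub : ∀ t, 0 < t → ∫⁻ s in Set.Ioc 0 t, ENNReal.ofReal √s * φ s =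
      ∫⁻ r in Set.Ioc (0 : ℝ) 1, ENNReal.ofReal r⁻¹ * F (r * t) := by
    intro t ht
    have hm : Measurable ((Set.Ioc 0 t).indicator fun s => ENNReal.ofReal √s * φ s) :=
      (by fun_prop : Measurable fun s => ENNReal.ofReal √s * φ s).indicator measurableSet_Ioc
    have h1 := lintegral_comp_mul_left_real hm ht
    rw [← lintegral_indicator measurableSet_Ioc, ← lintegral_indicator measurableSet_Ioc]
    have h2 : ∫⁻ s, (Set.Ioc 0 t).indicator (fun s => ENNReal.ofReal √s * φ s) s =
        ∫⁻ r, ENNReal.ofReal t *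
          (Set.Ioc 0 t).indicator (fun s => ENNReal.ofReal √s * φ s) (t * r) := by
      rw [lintegral_const_mul _ (by fun_prop), h1, ← mul_assoc,
        ← ENNReal.ofReal_mul ht.le, mul_inv_cancel₀ ht.ne', ENNReal.ofReal_one, one_mul]
    rw [h2]
    congr 1; ext r
    by_cases hr : r ∈ Set.Ioc (0 : ℝ) 1
    · have : t * r ∈ Set.Ioc 0 t := ⟨mul_pos ht hr.1, by nlinarith [hr.2]⟩
      rw [Set.indicator_of_mem this, Set.indicator_of_mem hr, hF]
      simp only
      have hr0 := hr.1
      rw [← mul_assoc, ← mul_assoc, ← ENNReal.ofReal_mul ht.le,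
        ← ENNReal.ofReal_mul (inv_pos.2 hr0).le, mul_comm t r]
      congr 2
      field_simp
    · have : t * r ∉ Set.Ioc 0 t := by
        intro h
        refine hr ⟨pos_of_mul_pos_right h.1 ht.le, ?_⟩
        exact le_of_mul_le_mul_left (by simpa using h.2) ht
      rw [Set.indicator_of_notMem this, Set.indicator_of_notMem hr, mul_zero]
  refine (besovNorm_mono hq fun t ht => (hsub t ht).le).trans ?_
  have hu : Measurable (Function.uncurry fun (r t : ℝ) => ENNReal.ofReal r⁻¹ * F (r * t)) := by
    unfold Function.uncurry; fun_prop
  refine (besovNorm_lintegral_le hu hq).trans ?_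
  have e : ∀ r ∈ Set.Ioc (0 : ℝ) 1, besovNorm q (fun t => ENNReal.ofReal r⁻¹ * F (r * t)) =
      ENNReal.ofReal (r ^ (-(1 / 2) : ℝ)) * besovNorm q F := by
    intro r hr
    rw [besovNorm_const_mul hq (by fun_prop), besovNorm_comp_mul hq hFm hr.1,
      ← mul_assoc, ← ENNReal.ofReal_mul (inv_pos.2 hr.1).le]
    congr 2
    rw [Real.sqrt_eq_rpow, ← Real.rpow_neg_one, ← Real.rpow_add hr.1]
    norm_num
  rw [setLIntegral_congr_fun measurableSet_Ioc e, lintegral_mul_const _ (by fun_prop)]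
  gcongr
  have hi : IntervalIntegrable (fun r : ℝ => r ^ (-(1 / 2) : ℝ)) volume 0 1 :=
    intervalIntegral.intervalIntegrable_rpow' (by norm_num)
  have hv : ∫ r in (0 : ℝ)..1, r ^ (-(1 / 2) : ℝ) = 2 := by
    rw [integral_rpow (Or.inl (by norm_num))]; norm_num
  rw [intervalIntegral.integral_of_le zero_le_one] at hv
  rw [← ofReal_integral_eq_lintegral_ofReal, hv, ENNReal.ofReal_ofNat]
  · exact (intervalIntegrable_iff_integrableOn_Ioc_of_le zero_le_one).1 hi
  · filter_upwards [ae_restrict_mem measurableSet_Ioc] with r hr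
    exact Real.rpow_nonneg hr.1.le _

end HR

namespace HR

open scoped ENNReal

section

variable {X : Type*} [NormedAddCommGroup X]

lemma eLpNorm_ofReal_eq {p : ℝ} (hp : 1 ≤ p) (g : HR → X) :
    eLpNorm g (ENNReal.ofReal p) = (∫⁻ h, ‖g h‖ₑ ^ p) ^ (1 / p) := by
  rw [eLpNorm_eq_lintegral_rpow_enorm_toReal (by simpa using by linarith) ENNReal.ofReal_ne_top,
    ENNReal.toReal_ofReal (by linarith)]

lemma ofReal_integral_rpow_div_le {g : HR → X} (hg : Continuous g) {p q : ℝ} (hp : 1 ≤ p)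
    (hq : 1 ≤ q) {t : ℝ} (ht : 0 < t) :
    ENNReal.ofReal ((∫ h : HR, ‖g h‖ ^ p) ^ (q / p) / t ^ (1 + q / 2)) ≤
      ENNReal.ofReal (t ^ (-1 - q / 2)) * eLpNorm g (ENNReal.ofReal p) ^ q := by
  have hp0 : 0 < p := by linarith
  have e : ∀ h, ENNReal.ofReal (‖g h‖ ^ p) = ‖g h‖ₑ ^ p := fun h => by
    rw [← ofReal_norm, ENNReal.ofReal_rpow_of_nonneg (norm_nonneg _) hp0.le]
  have hI : ENNReal.ofReal (∫ h : HR, ‖g h‖ ^ p) ≤ ∫⁻ h, ‖g h‖ₑ ^ p := by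
    rw [integral_eq_lintegral_of_nonneg_ae (Filter.Eventually.of_forall fun h => by positivity)
      (hg.norm.rpow_const fun _ => Or.inr hp0.le).aestronglyMeasurable]
    simp_rw [e]
    exact ENNReal.ofReal_toReal_le
  have hI0 : 0 ≤ ∫ h : HR, ‖g h‖ ^ p := integral_nonneg fun h => by positivity
  rw [div_eq_mul_inv, ← Real.rpow_neg ht.le, mul_comm, ENNReal.ofReal_mul (by positivity),
    neg_add', eLpNorm_ofReal_eq hp, ← ENNReal.rpow_mul, one_div_mul_eq_div,
    ← ENNReal.ofReal_rpow_of_nonneg hI0 (by positivity)]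
  gcongr

variable [NormedSpace ℝ X]

/-- `‖(Q_s * g)(h)‖`, extended by zero to `s ≤ 0`. -/
noncomputable def enormQ (g : HR → X) : ℝ × HR → ℝ≥0∞ :=
  (Set.Ioi (0 : ℝ) ×ˢ (Set.univ : Set HR)).indicator fun x => ‖conv (Qker x.1) g x.2‖ₑ

lemma measurable_enormQ {g : HR → X} (hg : BddCont g) : Measurable (enormQ g) := by
  classical
  unfold enormQ
  rw [← Set.piecewise_eq_indicator]
  refine ContinuousOn.measurable_piecewise (fun x hx => ?_) continuousOn_const
    (measurableSet_Ioi.prod MeasurableSet.univ)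
  exact (continuousAt_conv_Qker hg hx.1 x.2).enorm.continuousWithinAt

lemma enormQ_of_pos (g : HR → X) {s : ℝ} (hs : 0 < s) (h : HR) :
    enormQ g (s, h) = ‖conv (Qker s) g h‖ₑ :=
  Set.indicator_of_mem (s := Set.Ioi (0 : ℝ) ×ˢ (Set.univ : Set HR))
    (a := (s, h)) ⟨hs, Set.mem_univ _⟩ _

/-- The `L_p(ℓ_p²)` norm of the pair `(Q_s * A, Q_s * B)`, extended by zero to `s ≤ 0`. -/
noncomputable def pairNorm (p : ℝ) (A B : HR → X) (s : ℝ) : ℝ≥0∞ :=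
  (∫⁻ h : HR, (enormQ A (s, h) ^ p + enormQ B (s, h) ^ p)) ^ (1 / p)

lemma measurable_pairNorm {A B : HR → X} (hA : BddCont A) (hB : BddCont B) (p : ℝ) :
    Measurable (pairNorm p A B) := by
  have hm : Measurable fun x : ℝ × HR => enormQ A x ^ p + enormQ B x ^ p :=
    ((measurable_enormQ hA).pow_const p).add ((measurable_enormQ hB).pow_const p)
  exact (Measurable.lintegral_prod_right' hm).pow_const _

lemma eLpNorm_conv_Qker_add_le (A B : HR → X) {p : ℝ} (hp : 1 ≤ p) {s : ℝ} (hs : 0 < s) :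
    eLpNorm (conv (Qker s) A) (ENNReal.ofReal p) + eLpNorm (conv (Qker s) B) (ENNReal.ofReal p) ≤
      2 * pairNorm p A B s := by
  rw [two_mul, eLpNorm_ofReal_eq hp, eLpNorm_ofReal_eq hp]
  unfold pairNorm
  simp_rw [enormQ_of_pos _ hs]
  gcongr
  · exact le_self_add
  · exact le_add_self

lemma smallScales_le {A B : HR → X} (hA : BddCont A) (hB : BddCont B) {p : ℝ} (hp : 1 ≤ p) (t : ℝ) :
    smallScales p A B t ≤ ENNReal.ofReal (4 * cP) *
      ∫⁻ s in Set.Ioc 0 t, ENNReal.ofReal √s * pairNorm p A B s := by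
  have hm := measurable_pairNorm hA hB p
  rw [← lintegral_const_mul _ (by fun_prop)]
  refine setLIntegral_mono' measurableSet_Ioc fun s hs => ?_
  calc _ ≤ ENNReal.ofReal (cP * √s) * (2 * (2 * pairNorm p A B s)) := by
        gcongr; exact eLpNorm_conv_Qker_add_le A B hp hs.1
    _ = _ := by
        rw [ENNReal.ofReal_mul cP_nonneg, ENNReal.ofReal_mul (by norm_num), ENNReal.ofReal_ofNat,
          show (4 : ℝ≥0∞) = 2 * 2 by norm_num]
        ring

lemma exists_measurable_bound [CompleteSpace X] {f A B : HR → X} (H : HasHorGrad f A B)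
    (hf : BddCont f) (hA : BddCont A) (hB : BddCont B) {p q : ℝ} (hp : 1 ≤ p) (hq : 1 ≤ q)
    (hft : eLpNorm f (ENNReal.ofReal p) ≠ ⊤) (hAt : eLpNorm A (ENNReal.ofReal p) ≠ ⊤)
    (hBt : eLpNorm B (ENNReal.ofReal p) ≠ ⊤) :
    ∃ D : ℝ → ℝ≥0∞, Measurable D ∧
      (∀ t, 0 < t → eLpNorm (fun h => f (vmul t h) - f h) (ENNReal.ofReal p) ≤ D t) ∧
      besovNorm q D ≤ ENNReal.ofReal (384 * cP) *
        besovNorm q (fun t => ENNReal.ofReal (t * √t) * pairNorm p A B t) := by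
  set G : ℝ → ℝ≥0∞ := fun t => ∫⁻ s in Set.Ioc 0 t, ENNReal.ofReal √s * pairNorm p A B s
  have hG : Measurable G :=
    Monotone.measurable fun a b hab => lintegral_mono_set (Set.Ioc_subset_Ioc_right hab)
  set G₁ : ℝ → ℝ≥0∞ := fun t => ∑' k : ℕ, 2⁻¹ ^ k * G (2 ^ k * t) with hG₁def
  have hG₁ : Measurable G₁ := Measurable.tsum fun k => by fun_prop
  set G₂ : ℝ → ℝ≥0∞ := fun t => ∑' k : ℕ, 2⁻¹ ^ k * G₁ (2 ^ k * t) with hG₂def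
  have hG₂ : Measurable G₂ := Measurable.tsum fun k => by fun_prop
  have hPt : 2 * eLpNorm f (ENNReal.ofReal p) ≠ ⊤ := ENNReal.mul_ne_top (by simp) hft
  have he : ∀ t, 0 < t → poissonErr p f t ≤ ENNReal.ofReal (4 * cP) * G₁ t := by
    intro t ht
    refine (le_tsum_of_le_half_add (e := poissonErr p f) (G := smallScales p A B) hPt
      (fun s hs => poissonErr_le_half_add H hf hA hB hp hAt hBt hs)
      (fun s hs => poissonErr_le_two_mul hf hp hs) ht).trans ?_
    rw [hG₁def, ← ENNReal.tsum_mul_left]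
    refine ENNReal.tsum_le_tsum fun k => ?_
    rw [mul_left_comm]
    gcongr
    exact smallScales_le hA hB hp _
  refine ⟨fun t => 3 * ENNReal.ofReal (4 * cP) * G₂ t, by fun_prop, fun t ht => ?_, ?_⟩
  · refine (eLpNorm_vmul_sub_le_tsum hf hp hft ht).trans ?_
    simp only
    rw [mul_assoc]
    gcongr
    rw [hG₂def, ← ENNReal.tsum_mul_left]
    refine ENNReal.tsum_le_tsum fun k => ?_
    rw [mul_left_comm]
    gcongr
    exact he _ (by positivity)
  · rw [besovNorm_const_mul hq hG₂]
    have h3 := besovNorm_lintegral_sqrt_le hq (measurable_pairNorm hA hB p)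
    refine (mul_le_mul_right ((besovNorm_dyadic_sum_le hq hG₁).trans (mul_le_mul_right
      ((besovNorm_dyadic_sum_le hq hG).trans (mul_le_mul_right h3 4)) 4)) _).trans_eq ?_
    rw [ENNReal.ofReal_mul (by norm_num), ENNReal.ofReal_mul (by norm_num),
      ENNReal.ofReal_ofNat, ENNReal.ofReal_ofNat,
      show (384 : ℝ≥0∞) = 3 * 4 * 4 * 4 * 2 by norm_num]
    ring

lemma memLp_conv_Qker {g : HR → X} (hg : BddCont g) {p : ℝ} (hp : 1 ≤ p)
    (hgt : eLpNorm g (ENNReal.ofReal p) ≠ ⊤) {t : ℝ} (ht : 0 < t) :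
    MemLp (conv (Qker t) g) (ENNReal.ofReal p) := by
  refine ⟨(hg.conv (integrable_Qker ht)).1.aestronglyMeasurable, ?_⟩
  exact (eLpNorm_conv_le hg (continuous_Qker ht) hp).trans_lt
    (ENNReal.mul_lt_top (integrable_Qker ht).2 hgt.lt_top)

lemma pairNorm_eq {A B : HR → X} (hA : BddCont A) (hB : BddCont B) {p : ℝ} (hp : 1 ≤ p)
    (hAt : eLpNorm A (ENNReal.ofReal p) ≠ ⊤) (hBt : eLpNorm B (ENNReal.ofReal p) ≠ ⊤) {t : ℝ}
    (ht : 0 < t) :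
    pairNorm p A B t = ENNReal.ofReal
      ((∫ h : HR, (‖conv (Qker t) A h‖ ^ p + ‖conv (Qker t) B h‖ ^ p)) ^ (1 / p)) := by
  have hp0 : 0 < p := by linarith
  have hi : ∀ {g : HR → X}, BddCont g → eLpNorm g (ENNReal.ofReal p) ≠ ⊤ →
      Integrable fun h => ‖conv (Qker t) g h‖ ^ p := fun hg hgt => by
    have := (memLp_conv_Qker hg hp hgt ht).integrable_norm_rpow (by simpa using hp0)
      ENNReal.ofReal_ne_top
    rwa [ENNReal.toReal_ofReal hp0.le] at this
  have h0 : ∀ h : HR, 0 ≤ ‖conv (Qker t) A h‖ ^ p + ‖conv (Qker t) B h‖ ^ p := fun h => by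
    positivity
  have hsum : Integrable fun h => ‖conv (Qker t) A h‖ ^ p + ‖conv (Qker t) B h‖ ^ p :=
    (hi hA hAt).add (hi hB hBt)
  rw [← ENNReal.ofReal_rpow_of_nonneg (integral_nonneg h0) (by positivity),
    ofReal_integral_eq_lintegral_ofReal hsum
      (Filter.Eventually.of_forall h0)]
  unfold pairNorm
  congr 2; ext h
  rw [enormQ_of_pos _ ht, enormQ_of_pos _ ht, ENNReal.ofReal_add (by positivity) (by positivity),
    ← ofReal_norm, ← ofReal_norm,
    ENNReal.ofReal_rpow_of_nonneg (norm_nonneg _) hp0.le,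
    ENNReal.ofReal_rpow_of_nonneg (norm_nonneg _) hp0.le]

end

end HR

open HR in
/-- Proposition 2.3: the vertical Besov-type seminorm is controlled by the
`g`-function of the horizontal gradient. -/
theorem vertical_controlled_by_g_function_of_gradient :
    ∃ C : ℝ, 0 < C ∧
      ∀ p q : ℝ, 1 ≤ p → 1 ≤ q →
        ∀ (X : Type) [NormedAddCommGroup X] [NormedSpace ℝ X] [CompleteSpace X],
          ∀ f : HR → X, ContDiff ℝ (⊤ : ℕ∞) f → HasCompactSupport f →
            (∫⁻ t in Set.Ioi (0 : ℝ),
                ENNReal.ofReal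
                  ((∫ h : HR, ‖f (vmul t h) - f h‖ ^ p) ^ (q / p) / t ^ (1 + q / 2))) ^ (1 / q) ≤
              ENNReal.ofReal C *
                (∫⁻ t in Set.Ioi (0 : ℝ),
                  ENNReal.ofReal
                    (t ^ (q - 1) *
                      ((∫ h : HR, (‖conv (Qker t) (da f) h‖ ^ p + ‖conv (Qker t) (db f) h‖ ^ p))
                          ^ (1 / p)) ^ q)) ^ (1 / q) := by
  refine ⟨384 * cP + 1, by linarith [cP_nonneg], fun p q hp hq X _ _ _ f hf hfs => ?_⟩
  have hA := bddCont_of_hasCompactSupport (continuous_da hf) (hasCompactSupport_da hfs)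
  have hB := bddCont_of_hasCompactSupport (continuous_db hf) (hasCompactSupport_db hfs)
  have hfb := bddCont_of_hasCompactSupport hf.continuous hfs
  have hft : eLpNorm f (ENNReal.ofReal p) ≠ ⊤ :=
    (hf.continuous.memLp_of_hasCompactSupport hfs).2.ne
  have hAt : eLpNorm (da f) (ENNReal.ofReal p) ≠ ⊤ :=
    ((continuous_da hf).memLp_of_hasCompactSupport (hasCompactSupport_da hfs)).2.ne
  have hBt : eLpNorm (db f) (ENNReal.ofReal p) ≠ ⊤ :=
    ((continuous_db hf).memLp_of_hasCompactSupport (hasCompactSupport_db hfs)).2.ne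
  obtain ⟨D, hDm, hD, hDle⟩ :=
    exists_measurable_bound (hasHorGrad_of_contDiff hf) hfb hA hB hp hq hft hAt hBt
  have hφ := measurable_pairNorm hA hB p
  have lhs : (∫⁻ t in Set.Ioi (0 : ℝ), ENNReal.ofReal
      ((∫ h : HR, ‖f (vmul t h) - f h‖ ^ p) ^ (q / p) / t ^ (1 + q / 2))) ^ (1 / q) ≤
      besovNorm q D := by
    unfold besovNorm
    rw [lintegral_besovMeasure (hDm.pow_const q)]
    refine ENNReal.rpow_le_rpow (setLIntegral_mono' measurableSet_Ioi fun t ht => ?_)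
      (by positivity)
    have hc : Continuous fun h => f (vmul t h) - f h :=
      (hf.continuous.comp (by unfold vmul; fun_prop)).sub hf.continuous
    refine (ofReal_integral_rpow_div_le hc hp hq ht).trans ?_
    gcongr
    exact hD t ht
  have rhs : besovNorm q (fun t => ENNReal.ofReal (t * √t) * pairNorm p (da f) (db f) t) =
      (∫⁻ t in Set.Ioi (0 : ℝ), ENNReal.ofReal (t ^ (q - 1) *
        ((∫ h : HR, (‖conv (Qker t) (da f) h‖ ^ p + ‖conv (Qker t) (db f) h‖ ^ p))
          ^ (1 / p)) ^ q)) ^ (1 / q) := by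
    unfold besovNorm
    rw [lintegral_besovMeasure (by fun_prop)]
    congr 1
    refine setLIntegral_congr_fun measurableSet_Ioi fun t ht => ?_
    have ht0 : 0 < t := ht
    have hI : 0 ≤ (∫ h : HR, (‖conv (Qker t) (da f) h‖ ^ p + ‖conv (Qker t) (db f) h‖ ^ p))
          ^ (1 / p) := Real.rpow_nonneg (integral_nonneg fun h => by positivity) _
    simp only
    rw [pairNorm_eq hA hB hp hAt hBt ht0, ← ENNReal.ofReal_mul (by positivity),
      ENNReal.ofReal_rpow_of_nonneg (by positivity) (by positivity),
      ← ENNReal.ofReal_mul (by positivity), Real.mul_rpow (by positivity) hI, ← mul_assoc]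
    congr 2
    rw [Real.sqrt_eq_rpow, ← Real.rpow_one_add' ht0.le (by norm_num), ← Real.rpow_mul ht0.le,
      ← Real.rpow_add ht0]
    congr 1; ring
  rw [← rhs]
  refine lhs.trans (hDle.trans ?_)
  gcongr
  linarith
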